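/- arXiv:2309.01589 — 3 statements merged into one kernel-verified Lean document; each statement's English description precedes it below -/
import Mathlib

section
/- For every sequence m = (m_n) of integers ≥ 2 and every sequence (c_n) with c_n > 1 and α := sup_n c_n/m_n < 1, there exist sequences k = (k_n) of integers with k_n > m_n and q = (q_n) ∈ (0,1)^ℕ such that the generalized Ferens series ∑ a_n(m,k,q) converges, its achievement set is a Cantorval, and moreover (s_{n+1}+m_{n+1}) q_{n+1} < c_n q_n for all n, and c_n < (1−α)(s_n+m_n) for all n. -/
open Set MeasureTheory Pointwise

/-- The achievement set (set of all subsums) of the series `∑ a n`. -/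
noncomputable def achievementSet (a : ℕ → ℝ) : Set ℝ :=
  {x | ∃ I : Set ℕ, HasSum (fun i : I => a i) x}

/-- `tail a n` is the sum of the terms with index `≥ n`. -/
noncomputable def tail (a : ℕ → ℝ) (n : ℕ) : ℝ := ∑' i : ℕ, a (n + i)

/-- The set of `k`-initial subsums: sums over subsets of the first `k` terms. -/
def Fset (a : ℕ → ℝ) (k : ℕ) : Set ℝ :=
  {x | ∃ I : Finset ℕ, I ⊆ Finset.range k ∧ x = ∑ i ∈ I, a i}

/-- The `k`-th iterate `I_k = ⋃_{f ∈ F_k} [f, f + r_k]`. -/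
noncomputable def iter (a : ℕ → ℝ) (k : ℕ) : Set ℝ :=
  ⋃ f ∈ Fset a k, Set.Icc f (f + tail a k)

/-- A Cantor set: a nonempty compact perfect nowhere dense subset of `ℝ`. -/
def IsCantorSet (C : Set ℝ) : Prop :=
  C.Nonempty ∧ IsCompact C ∧ Perfect C ∧ interior C = ∅

/-- A Cantorval: a nonempty compact set equal to the closure of its interior such that
both endpoints of every nontrivial connected component are accumulation points of
trivial (one-point) components. -/
def IsCantorval (P : Set ℝ) : Prop :=
  P.Nonempty ∧ IsCompact P ∧ P = closure (interior P) ∧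
  ∀ x ∈ P, (connectedComponentIn P x).Nontrivial →
    ∀ y ∈ ({sInf (connectedComponentIn P x), sSup (connectedComponentIn P x)} : Set ℝ),
      ∀ ε > 0, ∃ z ∈ P, z ≠ y ∧ |z - y| < ε ∧ connectedComponentIn P z = {z}

/-- Partial sums K_j = k_1 + ... + k_j of the block lengths. -/
def Kf (k : ℕ → ℕ) : ℕ → ℕ
  | 0 => 0
  | j + 1 => Kf k j + k j

/-- s_n = ∑_{i=1}^{k_n - 1} (m_n + i). -/
def sGF (m k : ℕ → ℕ) (i : ℕ) : ℕ := ∑ t ∈ Finset.range (k i - 1), (m i + t + 1)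

/-!
Write `S i = ∑_{t < k i} (m i + t)`, so that `S i * q i` is the sum of the block of index `i`,
whose terms are `(m i + t) * q i` for `t < k i`.

When `k` is large, all integers from `m` up to `∑_{t < k} (m + t)` minus a constant depending only
on `m` are subsums of `m, m + 1, …, m + k - 1` (`exists_digit`). Call `N` the number of these
integers. As `k` grows, `S / N` tends to `1`, so `k i` can be chosen with
`S (i + 1) < c i * N (i + 1)` and `c i < (1 - α) * S i` (`exists_block`). The ratios are defined
by `q i = N (i + 1) * q (i + 1)`.

* Interior. The subsums of the blocks after `i` include
  `∑_{j > i} (m j + d j) * q j` for all digits `d j < N j`. Since `q` is a mixed radix scale with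
  radices `N`, these fill an interval of length `q i`. Greedy expansion (`exists_expansion`)
  gives finite subsums dense in it, and the achievement set is closed.
* Gaps. The block sums decrease geometrically with ratio at most `1 - α`, so the sum of all terms
  after block `i` is at most `S (i + 1) * q (i + 1) / α < c i * q i / α ≤ m i * q i`, the
  smallest term of block `i`.

These two properties suffice (`isCantorval_of_gaps_of_intervals`). Every point of the achievement
set is within a short tail sum of a translate of such an interval. If `y` is the left
endpoint of a nontrivial component, there are gaps of the achievement set just to the left of `y`.
The right end `v` of such a gap must be a finite subsum, and to the right of `v` the set looks like
the achievement set of a tail near `0`, which has gaps accumulating at `0`. So `{v}` is a component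
(`exists_noSide_left`). Right endpoints follow from the symmetry `x ↦ (∑ a) - x`.
-/

/-! ### Subsums and a sufficient condition for a Cantorval -/

/-- The sum of the terms of `a` indexed by `I`. -/
noncomputable def sub (a : ℕ → ℝ) (I : Set ℕ) : ℝ := ∑' i, I.indicator a i

section Subsums

variable {a : ℕ → ℝ}

lemma achievementSet_eq_range (hs : Summable a) : achievementSet a = range (sub a) := by
  ext x
  constructor
  · rintro ⟨I, hI⟩
    exact ⟨I, (hasSum_subtype_iff_indicator.1 hI).tsum_eq⟩
  · rintro ⟨I, rfl⟩
    exact ⟨I, hasSum_subtype_iff_indicator.2 (hs.indicator I).hasSum⟩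

lemma sub_mono_of_le (hs : Summable a) {I J : Set ℕ}
    (h : ∀ i, I.indicator a i ≤ J.indicator a i) : sub a I ≤ sub a J :=
  (hs.indicator I).tsum_le_tsum h (hs.indicator J)

lemma sub_mono (h0 : ∀ i, 0 ≤ a i) (hs : Summable a) {I J : Set ℕ} (h : I ⊆ J) :
    sub a I ≤ sub a J :=
  sub_mono_of_le hs (indicator_le_indicator_of_subset h h0)

lemma sub_nonneg' (h0 : ∀ i, 0 ≤ a i) (I : Set ℕ) : 0 ≤ sub a I :=
  tsum_nonneg fun i => indicator_nonneg (fun i _ => h0 i) i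

lemma sub_union (hs : Summable a) {I J : Set ℕ} (h : Disjoint I J) :
    sub a (I ∪ J) = sub a I + sub a J := by
  unfold sub
  rw [indicator_union_of_disjoint h, (hs.indicator I).tsum_add (hs.indicator J)]

lemma sub_split (hs : Summable a) (I : Set ℕ) (n : ℕ) :
    sub a I = sub a (I ∩ Iio n) + sub a (I ∩ Ici n) := by
  rw [← sub_union hs]
  · rw [← inter_union_distrib_left, Iio_union_Ici, inter_univ]
  · exact (Iio_disjoint_Ici le_rfl).mono inter_subset_right inter_subset_right

lemma sub_finset (T : Finset ℕ) : sub a T = ∑ i ∈ T, a i := by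
  unfold sub
  rw [tsum_eq_sum (s := T)]
  · exact Finset.sum_congr rfl fun i hi => indicator_of_mem (by simpa using hi) a
  · intro i hi
    exact indicator_of_notMem (by simpa using hi) a

lemma le_sub_of_mem (h0 : ∀ i, 0 ≤ a i) (hs : Summable a) {I : Set ℕ} {i : ℕ} (hi : i ∈ I) :
    a i ≤ sub a I := by
  have h := sub_mono h0 hs (I := (({i} : Finset ℕ) : Set ℕ)) (J := I) (by simpa using hi)
  rwa [sub_finset, Finset.sum_singleton] at h

lemma sub_Iio_add_sub_Ici (hs : Summable a) (n : ℕ) :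
    ∑ i ∈ Finset.range n, a i + sub a (Ici n) = ∑' i, a i := by
  have h := sub_split hs univ n
  rw [univ_inter, univ_inter, ← Finset.coe_range, sub_finset] at h
  rw [← h, sub, indicator_univ]

lemma tendsto_sub_Ici (hs : Summable a) :
    Filter.Tendsto (fun n => sub a (Ici n)) Filter.atTop (nhds 0) := by
  have h := (tendsto_const_nhds (x := ∑' i, a i)).sub hs.tendsto_sum_tsum_nat
  rw [sub_self] at h
  refine h.congr fun n => ?_
  rw [← sub_Iio_add_sub_Ici hs n]
  ring

lemma isCompact_range_sub (h0 : ∀ i, 0 ≤ a i) (hs : Summable a) :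
    IsCompact (range (sub a)) := by
  have hc : Continuous fun b : ℕ → Bool => ∑' i, (if b i then a i else 0) := by
    refine continuous_tsum (u := a) (fun i => ?_) hs fun i b => ?_
    · exact (continuous_of_discreteTopology (f := fun t : Bool => if t then a i else 0)).comp
        (continuous_apply i)
    · split_ifs
      · rw [Real.norm_of_nonneg (h0 i)]
      · simpa using h0 i
  have he : range (sub a) = range fun b : ℕ → Bool => ∑' i, (if b i then a i else 0) := by
    classical
    ext x
    constructor
    · rintro ⟨I, rfl⟩
      refine ⟨fun i => decide (i ∈ I), ?_⟩
      simp [sub, indicator_apply]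
    · rintro ⟨b, rfl⟩
      refine ⟨{i | b i = true}, ?_⟩
      simp [sub, indicator_apply]
  rw [he]
  exact isCompact_range hc

lemma sub_compl (hs : Summable a) (I : Set ℕ) : sub a Iᶜ = sub a univ - sub a I := by
  rw [← union_compl_self I, sub_union hs disjoint_compl_right]
  ring

/-- The achievement set is symmetric about half of the total sum. -/
lemma reflect_mem (hs : Summable a) {x : ℝ} :
    sub a univ - x ∈ range (sub a) ↔ x ∈ range (sub a) := by
  constructor
  · rintro ⟨I, hI⟩
    exact ⟨Iᶜ, by rw [sub_compl hs, hI]; ring⟩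
  · rintro ⟨I, rfl⟩
    exact ⟨Iᶜ, sub_compl hs I⟩

/-- No nondegenerate interval with `v` as an endpoint lies in `A`. For `v ∈ A ⊆ ℝ` this says
that the connected component of `v` in `A` is `{v}`. -/
def NoSide (A : Set ℝ) (v : ℝ) : Prop :=
  (∀ p < v, ¬ Icc p v ⊆ A) ∧ ∀ p > v, ¬ Icc v p ⊆ A

lemma NoSide.component {A : Set ℝ} {v : ℝ} (hv : v ∈ A) (h : NoSide A v) :
    connectedComponentIn A v = {v} := by
  have hm := mem_connectedComponentIn hv
  refine Subset.antisymm (fun z hz => ?_) (singleton_subset_iff.2 hm)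
  have hp : IsPreconnected (connectedComponentIn A v) := isPreconnected_connectedComponentIn
  have hA := connectedComponentIn_subset A v
  rcases lt_trichotomy z v with hlt | heq | hgt
  · exact absurd ((hp.Icc_subset hz hm).trans hA) (h.1 z hlt)
  · exact heq
  · exact absurd ((hp.Icc_subset hm hz).trans hA) (h.2 z hgt)

/-- The right end `v` of a gap of the achievement set is a sum of finitely many terms, so that
immediately to the right of `v` the achievement set is a translate of that of a tail of the
series, and it has arbitrarily short gaps there. -/
lemma exists_noSide_left (h0 : ∀ i, 0 ≤ a i) (hs : Summable a)
    (hgap : ∀ n, ∃ N ≥ n, sub a (Ici (N + 1)) < a N ∧ ∀ i ≤ N, a i = 0 ∨ a N ≤ a i)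
    {w x : ℝ} (hw : w ∉ range (sub a)) (hx : x ∈ range (sub a)) (hwx : w < x) :
    ∃ v ∈ range (sub a), w < v ∧ v ≤ x ∧ NoSide (range (sub a)) v := by
  set A := range (sub a) with hA
  have hcp : IsCompact (A ∩ Ici w) := (isCompact_range_sub h0 hs).inter_right isClosed_Ici
  have hne : (A ∩ Ici w).Nonempty := ⟨x, hx, hwx.le⟩
  set v := sInf (A ∩ Ici w) with hvdef
  have hv := hcp.sInf_mem hne
  have hlow : ∀ z ∈ A, z < v → z < w := by
    intro z hz hzv
    by_contra hcon
    exact absurd (csInf_le hcp.bddBelow ⟨hz, not_lt.1 hcon⟩) (not_le.2 hzv)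
  have hwv : w < v := lt_of_le_of_ne hv.2 fun h => hw (h ▸ hv.1)
  refine ⟨v, hv.1, hwv, csInf_le hcp.bddBelow ⟨hx, hwx.le⟩, ?_, ?_⟩
  · intro p hp hsub
    have h1 : max p w ∈ A := hsub ⟨le_max_left _ _, (max_lt hp hwv).le⟩
    exact absurd (hlow _ h1 (max_lt hp hwv)) (not_lt.2 (le_max_right _ _))
  · intro p hp hsub
    obtain ⟨n, hn⟩ := ((tendsto_sub_Ici hs).eventually_lt_const (sub_pos.2 hwv)).exists
    -- A point of `A` left of the gap cannot be carried across it by terms of index `≥ n`.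
    have hcase : ∀ I : Set ℕ, v ≤ sub a I → v ≤ sub a (I ∩ Iio n) := by
      intro I hI
      by_contra hcon
      have h1 := hlow _ ⟨I ∩ Iio n, rfl⟩ (not_le.1 hcon)
      have h2 := sub_split hs I n
      have h3 : sub a (I ∩ Ici n) ≤ sub a (Ici n) := sub_mono h0 hs inter_subset_right
      linarith
    set F : Set ℝ := sub a '' {I | I ⊆ Iio n} ∩ Ioi v with hF
    have hFf : F.Finite := ((finite_Iio n).finite_subsets.image _).inter_of_left _
    have hvF : v ∈ Fᶜ := fun h => lt_irrefl v h.2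
    obtain ⟨δ, hδ, hball⟩ := Metric.isOpen_iff.1 hFf.isClosed.isOpen_compl v hvF
    obtain ⟨n', hn'⟩ := Filter.eventually_atTop.1
      (hs.tendsto_atTop_zero.eventually_lt_const (lt_min hδ (sub_pos.2 hp)))
    obtain ⟨N, hN, hg, hmin⟩ := hgap (max n n')
    have haN := lt_min_iff.1 (hn' N ((le_max_right _ _).trans hN))
    have hr0 := sub_nonneg' h0 (Ici (N + 1))
    obtain ⟨J, hJ⟩ := hsub (show v + (sub a (Ici (N + 1)) + a N) / 2 ∈ Icc v p from
      ⟨by linarith, by linarith [haN.2]⟩)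
    have h1 : v ≤ sub a (J ∩ Iio n) := hcase J (by rw [hJ]; linarith)
    have h2 := sub_split hs J n
    have h3 := sub_nonneg' h0 (J ∩ Ici n)
    have h4 : sub a (J ∩ Iio n) ≤ v := by
      by_contra hcon
      refine hball (a := sub a (J ∩ Iio n)) ?_ ⟨⟨_, inter_subset_right, rfl⟩, not_le.1 hcon⟩
      rw [Metric.mem_ball, Real.dist_eq, abs_lt]
      constructor <;> linarith [haN.1]
    by_cases hex : ∃ i ∈ J ∩ Ici n, i ≤ N ∧ a i ≠ 0
    · obtain ⟨i, hi, hiN, hne0⟩ := hex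
      have h5 := (hmin i hiN).resolve_left hne0
      have h6 := le_sub_of_mem h0 hs hi
      linarith
    · push Not at hex
      have h5 : sub a (J ∩ Ici n) ≤ sub a (Ici (N + 1)) := by
        refine sub_mono_of_le hs fun i => ?_
        rcases Nat.lt_or_ge N i with hi | hi
        · rw [indicator_of_mem (s := Ici (N + 1)) (show N + 1 ≤ i from hi)]
          exact indicator_le_self' (fun _ _ => h0 i) i
        · refine le_trans (le_of_eq ?_) (indicator_nonneg (fun i _ => h0 i) i)
          rw [indicator_apply_eq_zero]
          exact fun hm => hex i hm hi
      linarith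

lemma exists_noSide_right (h0 : ∀ i, 0 ≤ a i) (hs : Summable a)
    (hgap : ∀ n, ∃ N ≥ n, sub a (Ici (N + 1)) < a N ∧ ∀ i ≤ N, a i = 0 ∨ a N ≤ a i)
    {w x : ℝ} (hw : w ∉ range (sub a)) (hx : x ∈ range (sub a)) (hwx : x < w) :
    ∃ v ∈ range (sub a), x ≤ v ∧ v < w ∧ NoSide (range (sub a)) v := by
  obtain ⟨v, hv, h1, h2, h3, h4⟩ := exists_noSide_left h0 hs hgap
    (mt (reflect_mem hs).1 hw) ((reflect_mem hs).2 hx) (sub_lt_sub_left hwx (sub a univ))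
  refine ⟨sub a univ - v, (reflect_mem hs).2 hv, by linarith, by linarith, ?_, ?_⟩
  · intro p hp hsub
    refine h4 (sub a univ - p) (by linarith) fun z hz => (reflect_mem hs).1 (hsub ⟨?_, ?_⟩)
    · linarith [hz.2]
    · linarith [hz.1]
  · intro p hp hsub
    refine h3 (sub a univ - p) (by linarith) fun z hz => (reflect_mem hs).1 (hsub ⟨?_, ?_⟩)
    · linarith [hz.2]
    · linarith [hz.1]

/-- A series with arbitrarily late gaps (`hgap`: some term exceeds the sum of all later ones and
is minimal among the nonzero terms up to it), each of whose tails has subsums dense in some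
nondegenerate interval (`hint`), has a Cantorval as its achievement set. -/
lemma isCantorval_of_gaps_of_intervals (h0 : ∀ i, 0 ≤ a i) (hs : Summable a)
    (hgap : ∀ n, ∃ N ≥ n, sub a (Ici (N + 1)) < a N ∧ ∀ i ≤ N, a i = 0 ∨ a N ≤ a i)
    (hint : ∀ n, ∃ c d : ℝ, c < d ∧ ∀ x ∈ Icc c d, ∀ ε > 0,
      ∃ I : Set ℕ, I ⊆ Ici n ∧ |x - sub a I| < ε) :
    IsCantorval (achievementSet a) := by
  rw [achievementSet_eq_range hs]
  have hcp := isCompact_range_sub h0 hs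
  refine ⟨range_nonempty _, hcp, ?_, ?_⟩
  · refine Subset.antisymm ?_ (closure_minimal interior_subset hcp.isClosed)
    rintro _ ⟨I, rfl⟩
    rw [Metric.mem_closure_iff]
    intro ε hε
    obtain ⟨n, hn⟩ := ((tendsto_sub_Ici hs).eventually_lt_const hε).exists
    obtain ⟨c, d, hcd, hI⟩ := hint n
    set f := sub a (I ∩ Iio n) with hf
    have hsubset : Icc (f + c) (f + d) ⊆ range (sub a) := by
      intro z hz
      rw [← hcp.isClosed.closure_eq, Metric.mem_closure_iff]
      intro η hη
      obtain ⟨J, hJ, hJd⟩ := hI (z - f) ⟨by linarith [hz.1], by linarith [hz.2]⟩ η hη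
      refine ⟨_, ⟨I ∩ Iio n ∪ J, rfl⟩, ?_⟩
      rw [sub_union hs ((Iio_disjoint_Ici le_rfl).mono inter_subset_right hJ), Real.dist_eq]
      rwa [← hf, ← sub_sub]
    have hy : (c + d) / 2 ∈ Icc c d := ⟨by linarith, by linarith⟩
    have hylo : 0 ≤ (c + d) / 2 := by
      refine le_of_forall_pos_lt_add fun η hη => ?_
      obtain ⟨J, hJ, hJd⟩ := hI _ hy η hη
      linarith [(abs_lt.1 hJd).1, sub_nonneg' h0 J]
    have hyhi : (c + d) / 2 ≤ sub a (Ici n) := by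
      refine le_of_forall_pos_lt_add fun η hη => ?_
      obtain ⟨J, hJ, hJd⟩ := hI _ hy η hη
      linarith [(abs_lt.1 hJd).2, sub_mono h0 hs hJ]
    refine ⟨f + (c + d) / 2, ?_, ?_⟩
    · rw [mem_interior_iff_mem_nhds]
      exact Filter.mem_of_superset (Icc_mem_nhds (by linarith) (by linarith)) hsubset
    · have h1 := sub_split hs I n
      have h2 := sub_nonneg' h0 (I ∩ Ici n)
      have h3 : sub a (I ∩ Ici n) ≤ sub a (Ici n) := sub_mono h0 hs inter_subset_right
      rw [Real.dist_eq, abs_lt]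
      constructor <;> linarith
  · intro x hx hnt y hy ε hε
    set A := range (sub a) with hA
    set C := connectedComponentIn A x with hC
    have hCA : C ⊆ A := connectedComponentIn_subset A x
    have hxC : x ∈ C := mem_connectedComponentIn hx
    have hCclosed : IsClosed C := by
      refine isClosed_of_closure_subset ?_
      exact isPreconnected_connectedComponentIn.closure.subset_connectedComponentIn
        (subset_closure hxC) (closure_minimal hCA hcp.isClosed)
    have hCcp : IsCompact C := hcp.of_isClosed_subset hCclosed hCA
    have hyC : y ∈ C := by
      rcases hy with rfl | rfl
      · exact hCcp.sInf_mem ⟨x, hxC⟩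
      · exact hCcp.sSup_mem ⟨x, hxC⟩
    have hyA := hCA hyC
    have hcomp : C = connectedComponentIn A y := connectedComponentIn_eq hyC
    have hfin : ∀ v ∈ A, NoSide A v → |v - y| < ε →
        ∃ z ∈ A, z ≠ y ∧ |z - y| < ε ∧ connectedComponentIn A z = {z} := by
      intro v hv hns hd
      refine ⟨v, hv, ?_, hd, hns.component hv⟩
      rintro rfl
      rw [hcomp, hns.component hv] at hnt
      exact not_nontrivial_singleton hnt
    rcases hy with hyl | hyr
    · have hw : ∃ w ∈ Ioo (y - ε) y, w ∉ A := by
        by_contra! hcon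
        have hsub : Icc (y - ε / 2) y ⊆ A := by
          intro z hz
          rcases hz.2.eq_or_lt with rfl | hlt
          · exact hyA
          · exact hcon z ⟨by linarith [hz.1], hlt⟩
        have hmem : y - ε / 2 ∈ C := by
          rw [hcomp]
          exact isPreconnected_Icc.subset_connectedComponentIn
            ⟨by linarith, le_rfl⟩ hsub ⟨le_rfl, by linarith⟩
        have := csInf_le hCcp.bddBelow hmem
        linarith
      obtain ⟨w, hw1, hw2⟩ := hw
      obtain ⟨v, hv, h1, h2, h3⟩ := exists_noSide_left h0 hs hgap hw2 hyA hw1.2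
      refine hfin v hv h3 (abs_lt.2 ⟨?_, ?_⟩) <;> linarith [hw1.1]
    · have hw : ∃ w ∈ Ioo y (y + ε), w ∉ A := by
        by_contra! hcon
        have hsub : Icc y (y + ε / 2) ⊆ A := by
          intro z hz
          rcases hz.1.eq_or_lt with rfl | hlt
          · exact hyA
          · exact hcon z ⟨hlt, by linarith [hz.2]⟩
        have hmem : y + ε / 2 ∈ C := by
          rw [hcomp]
          exact isPreconnected_Icc.subset_connectedComponentIn
            ⟨le_rfl, by linarith⟩ hsub ⟨by linarith, le_rfl⟩
        have := le_csSup hCcp.bddAbove hmem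
        rw [mem_singleton_iff] at hyr
        linarith
      obtain ⟨w, hw1, hw2⟩ := hw
      obtain ⟨v, hv, h1, h2, h3⟩ := exists_noSide_right h0 hs hgap hw2 hyA hw1.1
      refine hfin v hv h3 (abs_lt.2 ⟨?_, ?_⟩) <;> linarith [hw1.2]

end Subsums

/-! ### Subsums of one block -/

/-- With the terms `m, m + 1, …, 2m + l`, all of `m, m + 1, …` up to the total sum minus a
constant depending only on `m` are subsums. -/
lemma exists_digit (m : ℕ) (hm : 2 ≤ m) (l d : ℕ)
    (hd : d < 3 * m + ∑ t ∈ Finset.range l, (2 * m + 1 + t)) :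
    ∃ T ⊆ Finset.range (m + 1 + l), ∑ t ∈ T, (m + t) = m + d := by
  induction l generalizing d with
  | zero =>
    simp only [Finset.range_zero, Finset.sum_empty, add_zero] at hd ⊢
    rcases Nat.lt_or_ge d (m + 1) with h1 | h1
    · exact ⟨{d}, by simpa using h1, by simp⟩
    rcases Nat.lt_or_ge d (2 * m + 1) with h2 | h2
    · refine ⟨{0, d - m}, ?_, ?_⟩
      · intro t ht
        simp only [Finset.mem_insert, Finset.mem_singleton] at ht
        rw [Finset.mem_range]
        omega
      · rw [Finset.sum_pair (by omega)]
        omega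
    · refine ⟨{m, d - 2 * m}, ?_, ?_⟩
      · intro t ht
        simp only [Finset.mem_insert, Finset.mem_singleton] at ht
        rw [Finset.mem_range]
        omega
      · rw [Finset.sum_pair (by omega)]
        omega
  | succ l ih =>
    rw [Finset.sum_range_succ] at hd
    have hl : l ≤ ∑ t ∈ Finset.range l, (2 * m + 1 + t) := by
      simpa using Finset.card_nsmul_le_sum (Finset.range l) (fun t => 2 * m + 1 + t) 1
        (fun t _ => by omega)
    rcases Nat.lt_or_ge d (3 * m + ∑ t ∈ Finset.range l, (2 * m + 1 + t)) with h1 | h1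
    · obtain ⟨T, hT, hs⟩ := ih d h1
      exact ⟨T, hT.trans (Finset.range_subset_range.2 (by omega)), hs⟩
    · obtain ⟨T, hT, hs⟩ := ih (d - (2 * m + 1 + l)) (by omega)
      have hn : m + 1 + l ∉ T := fun h => by simpa using hT h
      refine ⟨insert (m + 1 + l) T, ?_, ?_⟩
      · intro t ht
        rcases Finset.mem_insert.1 ht with rfl | ht
        · simp
        · have := Finset.mem_range.1 (hT ht)
          rw [Finset.mem_range]
          omega
      · rw [Finset.sum_insert hn, hs]
        omega

/-- Choice of one block length: `k` is so large that the total `∑_{t<k} (m + t)` exceeds any given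
`B`, and is less than `c` times the number `N` of consecutive integers, starting at `m`, that are
subsums of the block. -/
lemma exists_block (m : ℕ) (hm : 2 ≤ m) (c B : ℝ) (hc : 1 < c) :
    ∃ k N : ℕ, m < k ∧ 1 ≤ N ∧ ((∑ t ∈ Finset.range k, (m + t) : ℕ) : ℝ) < c * N ∧
      B < ((∑ t ∈ Finset.range k, (m + t) : ℕ) : ℝ) ∧
      ∀ d < N, ∃ T ⊆ Finset.range k, ∑ t ∈ T, (m + t) = m + d := by
  set S := ∑ t ∈ Finset.range (m + 1), (m + t) with hS
  obtain ⟨l, hl⟩ := exists_nat_gt (max (S / (c - 1)) B)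
  obtain ⟨hl1, hl2⟩ := max_lt_iff.1 hl
  set W := ∑ t ∈ Finset.range l, (2 * m + 1 + t) with hW
  have hlW : l ≤ W := by
    simpa using Finset.card_nsmul_le_sum (Finset.range l) (fun t => 2 * m + 1 + t) 1
      (fun t _ => by omega)
  have hlW' : (l : ℝ) ≤ W := by exact_mod_cast hlW
  have hsum : ∑ t ∈ Finset.range (m + 1 + l), (m + t) = S + W := by
    rw [Finset.sum_range_add]
    congr 1
    exact Finset.sum_congr rfl fun t _ => by ring
  refine ⟨m + 1 + l, 3 * m + W, by omega, by omega, ?_, ?_, exists_digit m hm l⟩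
  · rw [hsum]
    rw [div_lt_iff₀ (by linarith)] at hl1
    push_cast
    have h1 : (l : ℝ) * (c - 1) ≤ W * (c - 1) := mul_le_mul_of_nonneg_right hlW' (by linarith)
    have h2 : 0 ≤ c * (3 * (m : ℝ)) := by positivity
    linarith
  · rw [hsum]
    push_cast
    have : (0 : ℝ) ≤ S := by positivity
    linarith

/-! ### The generalized Ferens series -/

section Blocks

variable {m k N : ℕ → ℕ} {q a : ℕ → ℝ}

lemma Kf_strictMono (hk : ∀ i, 0 < k i) : StrictMono (Kf k) :=
  strictMono_nat_of_lt_succ fun i => Nat.lt_add_of_pos_right (hk i)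

lemma exists_Kf (hk : ∀ i, 0 < k i) (n : ℕ) (hn : 0 < n) :
    ∃ i, Kf k i < n ∧ n ≤ Kf k (i + 1) := by
  have h : ∃ i, n ≤ Kf k i := ⟨n, (Kf_strictMono hk).le_apply⟩
  obtain ⟨i, hi⟩ : ∃ i, Nat.find h = i + 1 := by
    refine Nat.exists_eq_succ_of_ne_zero fun h0 => ?_
    have := Nat.find_spec h
    rw [h0] at this
    exact absurd this (not_le.2 hn)
  exact ⟨i, not_le.1 (Nat.find_min h (by omega)), hi ▸ Nat.find_spec h⟩

/-- The generalized Ferens sequence, with the unused index `0` given the value `0`. -/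
noncomputable def ferens (m k : ℕ → ℕ) (q : ℕ → ℝ) (n : ℕ) : ℝ :=
  open Classical in
  if h : ∃ i, Kf k i < n ∧ n ≤ Kf k (i + 1) then
    ((m h.choose : ℝ) + (Kf k (h.choose + 1) : ℝ) - n) * q h.choose
  else 0

lemma ferens_zero : ferens m k q 0 = 0 := by
  rw [ferens, dif_neg]
  simp

lemma ferens_eq (hk : ∀ i, 0 < k i) (i n : ℕ) (h1 : Kf k i < n) (h2 : n ≤ Kf k (i + 1)) :
    ferens m k q n = ((m i : ℝ) + (Kf k (i + 1) : ℝ) - n) * q i := by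
  have h : ∃ i, Kf k i < n ∧ n ≤ Kf k (i + 1) := ⟨i, h1, h2⟩
  have hi : h.choose = i := by
    have hm := Kf_strictMono hk
    have ha := hm.lt_iff_lt.1 (h.choose_spec.1.trans_le h2)
    have hb := hm.lt_iff_lt.1 (h1.trans_le h.choose_spec.2)
    omega
  rw [ferens, dif_pos h, hi]

/-- `a` is the generalized Ferens sequence for `m, k, q` at all positive indices. -/
def IsFerens (m k : ℕ → ℕ) (q a : ℕ → ℝ) : Prop :=
  ∀ i n, Kf k i < n → n ≤ Kf k (i + 1) →
    a n = ((m i : ℝ) + (Kf k (i + 1) : ℝ) - (n : ℝ)) * q i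

/-- The block of index `i`, read backwards, consists of the terms `(m i + t) * q i`, `t < k i`. -/
lemma sum_block (ha : IsFerens m k q a) (i : ℕ) {T : Finset ℕ} (hT : T ⊆ Finset.range (k i)) :
    ∑ n ∈ T.image (fun t => Kf k (i + 1) - t), a n = ((∑ t ∈ T, (m i + t) : ℕ) : ℝ) * q i := by
  have hK : Kf k (i + 1) = Kf k i + k i := rfl
  rw [Finset.sum_image]
  · push_cast
    rw [Finset.sum_mul]
    refine Finset.sum_congr rfl fun t ht => ?_
    have h1 := Finset.mem_range.1 (hT ht)
    rw [ha i _ (by omega) (by omega), Nat.cast_sub (by omega)]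
    ring
  · intro s hs t ht hst
    have h1 := Finset.mem_range.1 (hT hs)
    have h2 := Finset.mem_range.1 (hT ht)
    simp only at hst
    omega

lemma image_block_subset (i : ℕ) {T : Finset ℕ} (hT : T ⊆ Finset.range (k i)) {j : ℕ}
    (hj : j ∈ T.image (fun t => Kf k (i + 1) - t)) : Kf k i < j ∧ j ≤ Kf k (i + 1) := by
  have hK : Kf k (i + 1) = Kf k i + k i := rfl
  obtain ⟨t, ht, rfl⟩ := Finset.mem_image.1 hj
  have h1 := Finset.mem_range.1 (hT ht)
  omega

lemma sum_range_Kf (ha : IsFerens m k q a) (ha0 : a 0 = 0) (n : ℕ) :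
    ∑ j ∈ Finset.range (Kf k n + 1), a j =
      ∑ i ∈ Finset.range n, ((∑ t ∈ Finset.range (k i), (m i + t) : ℕ) : ℝ) * q i := by
  induction n with
  | zero => simp [Kf, ha0]
  | succ n ih =>
    have hK : Kf k (n + 1) = Kf k n + k n := rfl
    rw [Finset.sum_range_succ _ n, ← ih, ← sum_block ha n subset_rfl, hK,
      ← Finset.sum_range_add_sum_Ico a (show Kf k n + 1 ≤ Kf k n + k n + 1 by omega)]
    congr 2
    ext j
    simp only [Finset.mem_Ico, Finset.mem_image, Finset.mem_range]
    constructor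
    · intro h
      exact ⟨Kf k n + k n - j, by omega, by omega⟩
    · rintro ⟨t, ht, rfl⟩
      omega

/-- If the digits `m i, …, m i + N i - 1` are available in every block and `q` is the scale of the
mixed radix system with radices `N`, then greedy expansion of `x`, with digits shifted by `m`,
stays within the current scale of the target. -/
lemma exists_expansion (ha : IsFerens m k q a) (hk : ∀ i, 0 < k i) (hq : ∀ i, 0 < q i)
    (hqN : ∀ i, q i = N (i + 1) * q (i + 1))
    (hdig : ∀ i, ∀ d < N i, ∃ T ⊆ Finset.range (k i), ∑ t ∈ T, (m i + t) = m i + d)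
    (i : ℕ) (x : ℝ) (hx0 : 0 ≤ x) (hx : x < q i) (p : ℕ) :
    ∃ I : Finset ℕ, (∀ j ∈ I, Kf k (i + 1) < j ∧ j ≤ Kf k (i + 1 + p)) ∧
      0 ≤ x + ∑ j ∈ Finset.range p, (m (i + 1 + j) : ℝ) * q (i + 1 + j) - ∑ j ∈ I, a j ∧
      x + ∑ j ∈ Finset.range p, (m (i + 1 + j) : ℝ) * q (i + 1 + j) - ∑ j ∈ I, a j
        < q (i + p) := by
  induction p with
  | zero => exact ⟨∅, by simp, by simpa using hx0, by simpa using hx⟩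
  | succ p ih =>
    obtain ⟨I, hI, h1, h2⟩ := ih
    set y := x + ∑ j ∈ Finset.range p, (m (i + 1 + j) : ℝ) * q (i + 1 + j) - ∑ j ∈ I, a j with hy
    have hidx : i + (p + 1) = i + 1 + p := by omega
    have hQ := hq (i + 1 + p)
    have hyN : y < N (i + 1 + p) * q (i + 1 + p) := by
      have := hqN (i + p)
      rw [show i + p + 1 = i + 1 + p by omega] at this
      rwa [← this]
    have hfl : ⌊y / q (i + 1 + p)⌋₊ < N (i + 1 + p) := by
      rw [Nat.floor_lt (by positivity), div_lt_iff₀ hQ]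
      exact hyN
    obtain ⟨T, hT, hs⟩ := hdig _ _ hfl
    have hmem : ∀ j ∈ T.image (fun t => Kf k (i + 1 + p + 1) - t),
        Kf k (i + 1 + p) < j ∧ j ≤ Kf k (i + 1 + p + 1) :=
      fun j hj => image_block_subset _ hT hj
    have hmono := (Kf_strictMono hk).monotone
    have hdisj : Disjoint I (T.image (fun t => Kf k (i + 1 + p + 1) - t)) := by
      rw [Finset.disjoint_left]
      intro j hj hj'
      exact absurd (hI j hj).2 (not_le.2 (hmem j hj').1)
    have hlo : (⌊y / q (i + 1 + p)⌋₊ : ℝ) * q (i + 1 + p) ≤ y := by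
      rw [← le_div_iff₀ hQ]
      exact Nat.floor_le (by positivity)
    have hhi : y < (⌊y / q (i + 1 + p)⌋₊ + 1 : ℝ) * q (i + 1 + p) := by
      rw [← div_lt_iff₀ hQ]
      exact Nat.lt_floor_add_one _
    have hkey : x + ∑ j ∈ Finset.range (p + 1), (m (i + 1 + j) : ℝ) * q (i + 1 + j)
        - ∑ j ∈ I ∪ T.image (fun t => Kf k (i + 1 + p + 1) - t), a j
        = y - ⌊y / q (i + 1 + p)⌋₊ * q (i + 1 + p) := by
      rw [Finset.sum_union hdisj, sum_block ha _ hT, hs, Finset.sum_range_succ]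
      push_cast
      rw [hy]
      ring
    refine ⟨I ∪ T.image (fun t => Kf k (i + 1 + p + 1) - t), ?_, ?_, ?_⟩
    · intro j hj
      rcases Finset.mem_union.1 hj with hj | hj
      · exact ⟨(hI j hj).1, (hI j hj).2.trans (hmono (by omega))⟩
      · exact ⟨(hmono (by omega)).trans_lt (hmem j hj).1, (hmem j hj).2⟩
    · rw [hkey]
      linarith
    · rw [hkey, hidx]
      linarith

/-- Geometric decrease of the block sums `S` with ratio `1 - α`; this gives both the summability
of the series and the gaps. -/
lemma sum_Ico_block_le {S : ℕ → ℝ} {α : ℝ} (hα : 0 < α) (hS : ∀ i, 0 ≤ S i)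
    (h : ∀ i, S (i + 1) ≤ (1 - α) * S i) (i p : ℕ) :
    ∑ j ∈ Finset.Ico i (i + p), S j ≤ S i / α := by
  have key : ∑ j ∈ Finset.Ico i (i + p), S j + S (i + p) / α ≤ S i / α := by
    induction p with
    | zero => simp
    | succ p ih =>
      rw [← add_assoc, Finset.sum_Ico_succ_top (by omega)]
      have h1 : S (i + p + 1) / α ≤ (1 - α) * S (i + p) / α :=
        div_le_div_of_nonneg_right (h _) hα.le
      have h2 : (1 - α) * S (i + p) / α = S (i + p) / α - S (i + p) := by
        field_simp
      linarith
  have := div_nonneg (hS (i + p)) hα.le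
  linarith

lemma ferens_nonneg (ha : IsFerens m k q a) (hk : ∀ i, 0 < k i) (hq : ∀ i, 0 < q i)
    (ha0 : a 0 = 0) (n : ℕ) :
    0 ≤ a n := by
  rcases Nat.eq_zero_or_pos n with rfl | hn
  · exact ha0.ge
  · obtain ⟨i, h1, h2⟩ := exists_Kf hk n hn
    rw [ha i n h1 h2]
    have h3 : (n : ℝ) ≤ Kf k (i + 1) := by exact_mod_cast h2
    exact mul_nonneg (by linarith [(m i).cast_nonneg (α := ℝ)]) (hq i).le

lemma sum_range_le_block (ha : IsFerens m k q a) {α : ℝ} (hα : 0 < α)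
    (hk : ∀ i, 0 < k i) (hq : ∀ i, 0 < q i)
    (ha0 : a 0 = 0)
    (hgeo : ∀ i, ((∑ t ∈ Finset.range (k (i + 1)), (m (i + 1) + t) : ℕ) : ℝ) * q (i + 1) ≤
      (1 - α) * (((∑ t ∈ Finset.range (k i), (m i + t) : ℕ) : ℝ) * q i)) (i n : ℕ) :
    ∑ j ∈ Finset.range n, a j ≤ ∑ j ∈ Finset.range (Kf k i + 1), a j +
      ((∑ t ∈ Finset.range (k i), (m i + t) : ℕ) : ℝ) * q i / α := by
  have hn : n ≤ Kf k (i + n) + 1 := by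
    have := (Kf_strictMono hk).le_apply (x := i + n)
    omega
  refine (Finset.sum_le_sum_of_subset_of_nonneg (Finset.range_subset_range.2 hn)
    fun j _ _ => ferens_nonneg ha hk hq ha0 j).trans ?_
  rw [sum_range_Kf ha ha0, sum_range_Kf ha ha0,
    ← Finset.sum_range_add_sum_Ico _ (Nat.le_add_right i n)]
  gcongr
  exact sum_Ico_block_le (S := fun i => ((∑ t ∈ Finset.range (k i), (m i + t) : ℕ) : ℝ) * q i)
    hα (fun i => mul_nonneg (Nat.cast_nonneg _) (hq i).le) hgeo i n

end Blocks

/-! ### Choice of the parameters -/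

/-- For any m_n ≥ 2 and c_n > 1 with α := sup c_n/m_n < 1, there exist
k_n > m_n and q_n ∈ (0,1) such that the generalized Ferens series converges, its
achievement set is a Cantorval, (s_{n+1}+m_{n+1}) q_{n+1} < c_n q_n for all n, and
c_n < (1-α)(s_n+m_n) for all n. -/
theorem stmt_6 (m : ℕ → ℕ) (c : ℕ → ℝ) (hm : ∀ n, 2 ≤ m n) (hc : ∀ n, 1 < c n)
    (hbdd : BddAbove (Set.range fun n => c n / (m n : ℝ)))
    (hα : (⨆ n, c n / (m n : ℝ)) < 1) :
    ∃ (k : ℕ → ℕ) (q : ℕ → ℝ) (a : ℕ → ℝ),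
      (∀ n, m n < k n) ∧ (∀ n, 0 < q n ∧ q n < 1) ∧ a 0 = 0 ∧
      (∀ i n, Kf k i < n → n ≤ Kf k (i + 1) →
        a n = ((m i : ℝ) + (Kf k (i + 1) : ℝ) - (n : ℝ)) * q i) ∧
      Summable a ∧ IsCantorval (achievementSet a) ∧
      (∀ n, ((sGF m k (n + 1) : ℝ) + (m (n + 1) : ℝ)) * q (n + 1) < c n * q n) ∧
      (∀ n, c n < (1 - ⨆ j, c j / (m j : ℝ)) * ((sGF m k n : ℝ) + (m n : ℝ))) := by
  set α := ⨆ n, c n / (m n : ℝ) with hαdef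
  have hm0 : ∀ n, (0 : ℝ) < m n := fun n => by exact_mod_cast (by have := hm n; omega : 0 < m n)
  have hcα : ∀ n, c n ≤ α * m n := fun n => (div_le_iff₀ (hm0 n)).1 (le_ciSup hbdd n)
  have hα0 : 0 < α := pos_of_mul_pos_left ((one_pos.trans (hc 0)).trans_le (hcα 0)) (hm0 0).le
  -- At `n = 0` the truncated `n - 1` only imposes an extra condition.
  choose k N hmk hN hSN hB hdig using
    fun n => exists_block (m n) (hm n) (c (n - 1)) (c n / (1 - α)) (hc _)
  let q : ℕ → ℝ := fun n => (1 / 2) / ∏ i ∈ Finset.range n, (N (i + 1) : ℝ)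
  have hN0 : ∀ n, (1 : ℝ) ≤ N n := fun n => by exact_mod_cast hN n
  have hk : ∀ i, 0 < k i := fun i => (Nat.zero_le _).trans_lt (hmk i)
  have hP : ∀ n, (1 : ℝ) ≤ ∏ i ∈ Finset.range n, (N (i + 1) : ℝ) := by
    intro n
    induction n with
    | zero => simp
    | succ n ih =>
      rw [Finset.prod_range_succ]
      exact one_le_mul_of_one_le_of_one_le ih (hN0 _)
  have hq : ∀ n, 0 < q n := fun n => div_pos (by norm_num) (one_pos.trans_le (hP n))
  have hq1 : ∀ n, q n < 1 := fun n => by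
    refine (div_lt_one (one_pos.trans_le (hP n))).2 ?_
    linarith [hP n]
  have hqN : ∀ n, q n = N (n + 1) * q (n + 1) := by
    intro n
    have h1 := (one_pos.trans_le (hP n)).ne'
    have h2 := (one_pos.trans_le (hN0 (n + 1))).ne'
    simp only [q, Finset.prod_range_succ]
    field_simp
  set a := ferens m k q with hadef
  have ha0 : a 0 = 0 := ferens_zero
  have ha := ferens_eq (m := m) (q := q) hk
  rw [← hadef] at ha
  set S : ℕ → ℝ := fun i => ((∑ t ∈ Finset.range (k i), (m i + t) : ℕ) : ℝ) with hSdef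
  have hsS : ∀ n, (sGF m k n : ℝ) + m n = S n := by
    intro n
    have h : sGF m k n + m n = ∑ t ∈ Finset.range (k n), (m n + t) := by
      conv_rhs => rw [← Nat.sub_add_cancel (hk n), Finset.sum_range_succ']
      rfl
    simp only [hSdef, ← h, Nat.cast_add]
  have hstep : ∀ n, S (n + 1) * q (n + 1) < c n * q n := by
    intro n
    rw [hqN n, ← mul_assoc]
    exact mul_lt_mul_of_pos_right (hSN (n + 1)) (hq _)
  have hcS : ∀ n, c n < (1 - α) * S n := by
    intro n
    have := (div_lt_iff₀ (sub_pos.2 hα)).1 (hB n)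
    rwa [mul_comm]
  have hgeo : ∀ i, S (i + 1) * q (i + 1) ≤ (1 - α) * (S i * q i) := by
    intro i
    rw [← mul_assoc]
    exact (hstep i).le.trans (mul_le_mul_of_nonneg_right (hcS i).le (hq i).le)
  have h0 := ferens_nonneg ha hk hq ha0
  have hle := sum_range_le_block ha hα0 hk hq ha0 hgeo
  have hs : Summable a := summable_of_sum_range_le h0 (hle 0)
  have hmS : ∀ i, (m i : ℝ) ≤ S i := fun i => by
    rw [← hsS]
    linarith [(sGF m k i).cast_nonneg (α := ℝ)]
  have hcm : ∀ i, c i * q i / α ≤ m i * q i := fun i => by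
    rw [div_le_iff₀ hα0]
    nlinarith [hcα i, hq i]
  have hanti : Antitone fun i => (m i : ℝ) * q i := by
    refine antitone_nat_of_succ_le fun i => ?_
    have h1 : (m (i + 1) : ℝ) * q (i + 1) ≤ S (i + 1) * q (i + 1) :=
      mul_le_mul_of_nonneg_right (hmS _) (hq _).le
    have h2 : c i * q i ≤ (m i : ℝ) * q i := by
      refine mul_le_mul_of_nonneg_right ((hcα i).trans ?_) (hq i).le
      nlinarith [hm0 i]
    linarith [hstep i]
  have hmono := Kf_strictMono hk
  have haK : ∀ i, a (Kf k (i + 1)) = m i * q i := fun i => by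
    rw [ha i _ (hmono i.lt_succ_self) le_rfl]
    ring
  refine ⟨k, q, a, hmk, fun n => ⟨hq n, hq1 n⟩, ha0, ha, hs,
    isCantorval_of_gaps_of_intervals h0 hs ?_ ?_, fun n => by rw [hsS]; exact hstep n,
    fun n => by rw [hsS]; exact hcS n⟩
  · intro n
    refine ⟨Kf k (n + 1), n.le_succ.trans hmono.le_apply, ?_, ?_⟩
    · have h1 : ∑' j, a j ≤ _ := Real.tsum_le_of_sum_range_le h0 (hle (n + 1))
      have h2 := sub_Iio_add_sub_Ici hs (Kf k (n + 1) + 1)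
      have h3 := div_lt_div_of_pos_right (hstep n) hα0
      rw [haK]
      linarith [hcm n]
    · intro j hj
      rcases Nat.eq_zero_or_pos j with rfl | hj0
      · exact Or.inl ha0
      · right
        obtain ⟨i, h1, h2⟩ := exists_Kf hk j hj0
        have hin : i ≤ n := Nat.lt_succ_iff.1 (hmono.lt_iff_lt.1 (h1.trans_le hj))
        have h3 : (j : ℝ) ≤ Kf k (i + 1) := by exact_mod_cast h2
        rw [haK, ha i j h1 h2]
        refine (hanti hin).trans (mul_le_mul_of_nonneg_right ?_ (hq i).le)
        linarith
  · intro n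
    -- The last terms `m i * q i` of the blocks form a summable subsequence of `a`.
    have hsm : Summable fun i => (m i : ℝ) * q i := by
      have := hs.comp_injective (hmono.injective.comp Nat.succ_injective)
      exact this.congr fun i => haK i
    have hq0 : Filter.Tendsto q Filter.atTop (nhds 0) := by
      refine squeeze_zero (fun i => (hq i).le) (fun i => ?_) hsm.tendsto_atTop_zero
      have : (1 : ℝ) ≤ m i := by exact_mod_cast (by have := hm i; omega : 1 ≤ m i)
      exact le_mul_of_one_le_left (hq i).le this
    have hsm' : Summable fun j => (m (n + 1 + j) : ℝ) * q (n + 1 + j) :=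
      hsm.comp_injective (add_right_injective (n + 1))
    set L := ∑' j, (m (n + 1 + j) : ℝ) * q (n + 1 + j) with hL
    refine ⟨L, L + q n / 2, by linarith [hq n], fun x hx ε hε => ?_⟩
    have hL1 := Metric.tendsto_atTop.1 hsm'.tendsto_sum_tsum_nat (ε / 2) (half_pos hε)
    obtain ⟨p1, hp1⟩ := hL1
    obtain ⟨p2, hp2⟩ := Filter.eventually_atTop.1 (hq0.eventually_lt_const (half_pos hε))
    obtain ⟨I, hI, h1, h2⟩ := exists_expansion ha hk hq hqN hdig n (x - L)
      (by linarith [hx.1]) (by linarith [hx.2, hq n]) (max p1 p2)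
    refine ⟨I, fun j hj => ?_, ?_⟩
    · have h3 := hmono.le_apply (x := n + 1)
      have h4 := (hI j hj).1
      exact (by omega : n ≤ j)
    · have h3 := hp1 _ (le_max_left p1 p2)
      rw [Real.dist_eq, ← hL, abs_lt] at h3
      have h4 := hp2 (n + max p1 p2) (by have := le_max_right p1 p2; omega)
      rw [sub_finset, abs_lt]
      constructor <;> linarith [h3.1, h3.2]
end

section
/- For every achievable Cantorval D = A(a_n) there exists an achievable Cantor set C such that the algebraic sum D + C is a closed interval. -/
/-!
The series `b` is built from the tails of `a`, so that the two series fill each other's gaps.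

Write `T k` for the tail of `a` from an index `n k`, where `n 0 = 0` and `n` is so sparse that
`6 * T (k + 1) ≤ T k`. The series `b` has, for each `k`, a block of `m k` equal terms `β k`, where
`m k * β k = T k - T (k + 1)` and `m k` is the least number of terms making `β k ≤ 2 * T (k + 1)`.
Hence the blocks of `b` from the `k`-th on have total `T k`, just like the terms of `a` from the
`n k`-th on.

* *The sum is an interval.* A greedy choice reduces a target in `[0, 2 * T k]` to one in
  `[0, 2 * T (k + 1)]`: it uses first the terms `a i` with `n k ≤ i < n (k + 1)`, which are at
  most `T k`, and then the `k`-th block of `b` (`exists_subsum_reduce`, `exists_approx`). So the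
  finite subsums are dense in `[0, 2 * T 0]`, and both achievement sets are compact
  (`isCompact_achievementSet`).
* *`A(b)` is a Cantor set.* Compactness and perfectness hold for every positive summable series
  (`perfect_achievementSet`). The first `K` blocks give at most `∏ k < K, (m k + 1)` distinct
  subsums and the remaining ones add at most `T K`; by minimality of `m k` and sparsity of `n`,
  `(m k + 1) * T (k + 1) ≤ 3 / 4 * T k`, so these covers have measure at most `(3 / 4) ^ K * T 0`
  and `A(b)` is Lebesgue null.
-/

open Set MeasureTheory Pointwise

open Filter Topology

/-! ### General facts on achievement sets -/

lemma mem_achievementSet_iff (a : ℕ → ℝ) (x : ℝ) :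
    x ∈ achievementSet a ↔ ∃ I : Set ℕ, HasSum (I.indicator a) x := by
  unfold achievementSet
  simp only [Set.mem_ofPred_eq]
  refine exists_congr fun I => ?_
  exact hasSum_subtype_iff_indicator

lemma finsum_mem_achievementSet (a : ℕ → ℝ) (I : Finset ℕ) :
    ∑ i ∈ I, a i ∈ achievementSet a :=
  ⟨(I : Set ℕ), I.hasSum a⟩

lemma achievementSet_subset_Icc (a : ℕ → ℝ) (hpos : ∀ n, 0 < a n) {s : ℝ} (hs : HasSum a s) :
    achievementSet a ⊆ Set.Icc 0 s := by
  intro x hx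
  obtain ⟨I, hI⟩ := (mem_achievementSet_iff a x).1 hx
  refine ⟨hI.nonneg fun i => Set.indicator_nonneg (fun j _ => (hpos j).le) i, ?_⟩
  exact hasSum_le (fun i => Set.indicator_le_self' (fun j _ => (hpos j).le) i) hI hs

/-- The achievement set is a continuous image of the space of 0-1 sequences. -/
lemma isCompact_achievementSet (a : ℕ → ℝ) (hpos : ∀ n, 0 < a n) (hsum : Summable a) :
    IsCompact (achievementSet a) := by
  have hc : Continuous fun s : ℕ → Bool => ∑' i, (if s i then a i else 0) := by
    refine continuous_tsum (u := a) (fun i => ?_) hsum ?_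
    · exact (continuous_of_discreteTopology (f := fun t : Bool => if t then a i else 0)).comp
        (continuous_apply i)
    · intro i s
      split_ifs
      · simp [abs_of_pos (hpos i)]
      · simpa using (hpos i).le
  have : achievementSet a = Set.range fun s : ℕ → Bool => ∑' i, (if s i then a i else 0) := by
    classical
    ext x
    rw [mem_achievementSet_iff]
    constructor
    · rintro ⟨I, hI⟩
      refine ⟨fun i => decide (i ∈ I), ?_⟩
      rw [← hI.tsum_eq]
      simp [Set.indicator_apply]
    · rintro ⟨s, rfl⟩
      refine ⟨{i | s i = true}, ?_⟩
      have he : (fun i => if s i then a i else 0) = {i | s i = true}.indicator a := by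
        funext i
        simp [Set.indicator_apply]
      simp only [he]
      exact (hsum.indicator _).hasSum
  rw [this]
  exact isCompact_range hc

/-- Adding or removing one small term of a subsum gives a nearby, different subsum. -/
lemma perfect_achievementSet (a : ℕ → ℝ) (hpos : ∀ n, 0 < a n) (hsum : Summable a) :
    Perfect (achievementSet a) := by
  classical
  refine ⟨(isCompact_achievementSet a hpos hsum).isClosed, ?_⟩
  intro x hx
  rw [accPt_iff_nhds]
  intro U hU
  obtain ⟨ε, hε, hεU⟩ := Metric.mem_nhds_iff.1 hU
  obtain ⟨n, hn⟩ := ((hsum.tendsto_atTop_zero).eventually (gt_mem_nhds hε)).exists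
  obtain ⟨I, hI⟩ := (mem_achievementSet_iff a x).1 hx
  have hupd := hI.update n (if n ∈ I then 0 else a n)
  have hmem : (if n ∈ I then 0 else a n) - I.indicator a n + x ∈ achievementSet a := by
    refine (mem_achievementSet_iff a _).2 ⟨if n ∈ I then I \ {n} else insert n I, ?_⟩
    suffices he : (if n ∈ I then I \ {n} else insert n I).indicator a =
        Function.update (I.indicator a) n (if n ∈ I then 0 else a n) by rw [he]; exact hupd
    funext i
    by_cases hi : i = n
    · subst hi
      by_cases h : i ∈ I <;> simp [h]
    · by_cases h : n ∈ I <;> by_cases h' : i ∈ I <;> simp [h, h', hi]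
  refine ⟨_, ⟨hεU ?_, hmem⟩, ?_⟩
  · rw [Metric.mem_ball, Real.dist_eq]
    by_cases h : n ∈ I <;> simp [h, abs_of_pos (hpos n), hn]
  · have := hpos n
    by_cases h : n ∈ I <;> simp [h, this.ne']

/-! ### Greedy approximation -/

/-- Greedy step: if every term of a finite family is at most `W`, every target between `0`
and `W` plus the total of the family has a subsum leaving a remainder in `[0, W]`. -/
lemma exists_subsum_reduce {ι : Type*} (c : ι → ℝ) (W : ℝ) (S : Finset ι)
    (hS : ∀ i ∈ S, 0 ≤ c i ∧ c i ≤ W) :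
    ∀ x : ℝ, 0 ≤ x → x ≤ W + ∑ i ∈ S, c i →
      ∃ S' ⊆ S, 0 ≤ x - ∑ i ∈ S', c i ∧ x - ∑ i ∈ S', c i ≤ W := by
  classical
  induction S using Finset.induction_on with
  | empty =>
    intro x h0 h1
    exact ⟨∅, by simp, by simpa using h0, by simpa using h1⟩
  | insert i S hi ih =>
    intro x h0 h1
    rw [Finset.sum_insert hi] at h1
    have ih := ih fun j hj => hS j (Finset.mem_insert_of_mem hj)
    obtain ⟨hc0, hc1⟩ := hS i (Finset.mem_insert_self _ _)
    by_cases hx : c i ≤ x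
    · obtain ⟨S', hS', h2, h3⟩ := ih (x - c i) (by linarith) (by linarith)
      refine ⟨insert i S', Finset.insert_subset_insert _ hS', ?_⟩
      rw [Finset.sum_insert fun h => hi (hS' h)]
      constructor <;> linarith
    · have hs : 0 ≤ ∑ j ∈ S, c j :=
        Finset.sum_nonneg fun j hj => (hS j (Finset.mem_insert_of_mem hj)).1
      obtain ⟨S', hS', h2, h3⟩ := ih x h0 (by linarith)
      exact ⟨S', hS'.trans (Finset.subset_insert _ _), h2, h3⟩

/-- Targets in `[0, 2 * T 0]` are approximated within `2 * T K` by finite subsums of `a` and of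
the blocks `β`. -/
lemma exists_approx (a : ℕ → ℝ) (hpos : ∀ n, 0 < a n) (n : ℕ → ℕ) (T β : ℕ → ℝ) (m : ℕ → ℕ)
    (hn : ∀ k, n k ≤ n (k + 1)) (hT : ∀ k, 0 < T k) (hβ : ∀ k, 0 < β k)
    (haT : ∀ k, ∀ i ≥ n k, a i ≤ T k)
    (haS : ∀ k, ∑ i ∈ Finset.Ico (n k) (n (k + 1)), a i = T k - T (k + 1))
    (hmβ : ∀ k, m k * β k = T k - T (k + 1)) (hβT : ∀ k, β k ≤ 2 * T (k + 1))
    (x : ℝ) (hx0 : 0 ≤ x) (hx1 : x ≤ 2 * T 0) (K : ℕ) :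
    ∃ (I : Finset ℕ) (J : Finset (Σ k, Fin (m k))), (∀ i ∈ I, i < n K) ∧ (∀ p ∈ J, p.1 < K) ∧
      0 ≤ x - ∑ i ∈ I, a i - ∑ p ∈ J, β p.1 ∧
      x - ∑ i ∈ I, a i - ∑ p ∈ J, β p.1 ≤ 2 * T K := by
  classical
  induction K with
  | zero => exact ⟨∅, ∅, by simp, by simp, by simpa using hx0, by simpa using hx1⟩
  | succ K ih =>
    obtain ⟨I, J, hI, hJ, h0, h1⟩ := ih
    have hTK := hT K
    have hTK' := hT (K + 1)
    obtain ⟨I', hI', h2, h3⟩ := exists_subsum_reduce a (T K + T (K + 1))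
      (Finset.Ico (n K) (n (K + 1)))
      (fun i hi => ⟨(hpos i).le, by linarith [haT K i (Finset.mem_Ico.1 hi).1]⟩)
      _ h0 (by rw [haS]; linarith)
    obtain ⟨L, -, h4, h5⟩ := exists_subsum_reduce (fun _ : Fin (m K) => β K) (2 * T (K + 1))
      Finset.univ (fun _ _ => ⟨(hβ K).le, hβT K⟩) _ h2
      (by simp only [Finset.sum_const, Finset.card_univ, Fintype.card_fin, nsmul_eq_mul, hmβ]
          linarith)
    have hdI : Disjoint I I' := by
      rw [Finset.disjoint_left]
      intro i hi hi'
      have := hI i hi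
      have := (Finset.mem_Ico.1 (hI' hi')).1
      omega
    have hdJ : Disjoint J (L.map ⟨Sigma.mk K, sigma_mk_injective⟩) := by
      rw [Finset.disjoint_left]
      intro p hp hp'
      obtain ⟨l, -, rfl⟩ := Finset.mem_map.1 hp'
      exact lt_irrefl _ (hJ _ hp)
    have e : x - ∑ i ∈ I ∪ I', a i -
        ∑ p ∈ J ∪ L.map ⟨Sigma.mk K, sigma_mk_injective⟩, β p.1 =
        x - ∑ i ∈ I, a i - ∑ p ∈ J, β p.1 - ∑ i ∈ I', a i - ∑ i ∈ L, β K := by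
      rw [Finset.sum_union hdI, Finset.sum_union hdJ, Finset.sum_map]
      simp only [Function.Embedding.coeFn_mk]
      ring
    refine ⟨I ∪ I', J ∪ L.map ⟨Sigma.mk K, sigma_mk_injective⟩, ?_, ?_, ?_, ?_⟩
    · intro i hi
      rcases Finset.mem_union.1 hi with h | h
      · exact (hI i h).trans_le (hn K)
      · exact (Finset.mem_Ico.1 (hI' h)).2
    · intro p hp
      rcases Finset.mem_union.1 hp with h | h
      · exact (hJ p h).trans K.lt_succ_self
      · obtain ⟨l, -, rfl⟩ := Finset.mem_map.1 h
        exact K.lt_succ_self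
    · rw [e]; exact h4
    · rw [e]; exact h5

/-! ### The block series has a null achievement set -/

/-- The finite set of all sums `∑ k < K, j k * β k` with `j k ≤ m k`. -/
noncomputable def blockSums (β : ℕ → ℝ) (m : ℕ → ℕ) : ℕ → Finset ℝ
  | 0 => {0}
  | K + 1 => Finset.image₂ (fun v (j : ℕ) => v + j * β K) (blockSums β m K)
      (Finset.range (m K + 1))

lemma sum_mem_blockSums (β : ℕ → ℝ) (m j : ℕ → ℕ) (hj : ∀ k, j k ≤ m k) (K : ℕ) :
    ∑ k ∈ Finset.range K, (j k : ℝ) * β k ∈ blockSums β m K := by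
  induction K with
  | zero => simp [blockSums]
  | succ K ih =>
    rw [Finset.sum_range_succ, blockSums]
    exact Finset.mem_image₂_of_mem ih (Finset.mem_range.2 (Nat.lt_succ_of_le (hj K)))

lemma card_blockSums_mul_le (β T : ℕ → ℝ) (m : ℕ → ℕ)
    (hm : ∀ k, ((m k : ℝ) + 1) * T (k + 1) ≤ 3 / 4 * T k) (hT : ∀ k, 0 < T k) (K : ℕ) :
    ((blockSums β m K).card : ℝ) * T K ≤ (3 / 4) ^ K * T 0 := by
  induction K with
  | zero => simp [blockSums]
  | succ K ih =>
    have h1 : ((blockSums β m (K + 1)).card : ℝ) ≤ (blockSums β m K).card * ((m K : ℝ) + 1) := by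
      have := Finset.card_image₂_le (fun v (j : ℕ) => v + j * β K) (blockSums β m K)
        (Finset.range (m K + 1))
      rw [Finset.card_range] at this
      exact_mod_cast this
    calc ((blockSums β m (K + 1)).card : ℝ) * T (K + 1)
        ≤ (blockSums β m K).card * ((m K : ℝ) + 1) * T (K + 1) :=
          mul_le_mul_of_nonneg_right h1 (hT _).le
      _ = (blockSums β m K).card * (((m K : ℝ) + 1) * T (K + 1)) := by ring
      _ ≤ (blockSums β m K).card * (3 / 4 * T K) :=
          mul_le_mul_of_nonneg_left (hm K) (Nat.cast_nonneg _)
      _ = 3 / 4 * ((blockSums β m K).card * T K) := by ring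
      _ ≤ 3 / 4 * ((3 / 4) ^ K * T 0) := by linarith
      _ = (3 / 4) ^ (K + 1) * T 0 := by ring

/-- The sums `∑ k, j k * β k` with digits `j k ≤ m k` form a null set: they lie within `T K` above
`blockSums β m K`, for every `K`. -/
lemma volume_digitSums (β T : ℕ → ℝ) (m : ℕ → ℕ) (hβ : ∀ k, 0 < β k) (hT : ∀ k, 0 < T k)
    (hmβ : ∀ k, m k * β k = T k - T (k + 1))
    (hm : ∀ k, ((m k : ℝ) + 1) * T (k + 1) ≤ 3 / 4 * T k) (A : Set ℝ)
    (hA : ∀ x ∈ A, ∃ j : ℕ → ℕ, (∀ k, j k ≤ m k) ∧ HasSum (fun k => (j k : ℝ) * β k) x) :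
    volume A = 0 := by
  have hcover : ∀ K, A ⊆ ⋃ v ∈ blockSums β m K, Set.Icc v (v + T K) := by
    intro K x hx
    obtain ⟨j, hj, hs⟩ := hA x hx
    refine Set.mem_biUnion (sum_mem_blockSums β m j hj K) ⟨?_, ?_⟩
    · exact sum_le_hasSum _ (fun k _ => mul_nonneg (Nat.cast_nonneg _) (hβ k).le) hs
    · refine le_of_tendsto hs.tendsto_sum_nat (eventually_atTop.2 ⟨K, fun N hN => ?_⟩)
      suffices h : ∑ k ∈ Finset.range N, (j k : ℝ) * β k ≤
          ∑ k ∈ Finset.range K, (j k : ℝ) * β k + T K - T N by linarith [hT N]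
      induction N, hN using Nat.le_induction with
      | base => simp
      | succ N _ ih =>
        rw [Finset.sum_range_succ]
        have : (j N : ℝ) * β N ≤ m N * β N :=
          mul_le_mul_of_nonneg_right (by exact_mod_cast hj N) (hβ N).le
        linarith [hmβ N]
  have hbound : ∀ K, volume A ≤ ENNReal.ofReal ((3 / 4) ^ K * T 0) := by
    intro K
    calc volume A ≤ volume (⋃ v ∈ blockSums β m K, Set.Icc v (v + T K)) :=
          measure_mono (hcover K)
      _ ≤ ∑ v ∈ blockSums β m K, volume (Set.Icc v (v + T K)) := measure_biUnion_finset_le _ _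
      _ = ENNReal.ofReal ((blockSums β m K).card * T K) := by
          simp [Real.volume_Icc, ENNReal.ofReal_mul]
      _ ≤ _ := ENNReal.ofReal_le_ofReal (card_blockSums_mul_le β T m hm hT K)
  have hlim : Tendsto (fun K : ℕ => ENNReal.ofReal ((3 / 4) ^ K * T 0)) atTop (𝓝 0) := by
    have := (tendsto_pow_atTop_nhds_zero_of_lt_one (r := (3 / 4 : ℝ)) (by norm_num)
      (by norm_num)).mul_const (T 0)
    simpa using ENNReal.tendsto_ofReal this
  exact le_antisymm (ge_of_tendsto' hlim hbound) zero_le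

/-! ### Tails and the choice of the blocks -/

lemma tail_succ (a : ℕ → ℝ) (hsum : Summable a) (n : ℕ) : tail a n = a n + tail a (n + 1) := by
  unfold tail
  have h : Summable fun i => a (n + i) := hsum.comp_injective (add_right_injective n)
  rw [h.tsum_eq_zero_add]
  simp [add_assoc, add_comm 1]

lemma tail_pos (a : ℕ → ℝ) (hpos : ∀ n, 0 < a n) (hsum : Summable a) (n : ℕ) : 0 < tail a n :=
  (hsum.comp_injective (add_right_injective n)).tsum_pos (fun _ => (hpos _).le) 0 (hpos _)

lemma tendsto_tail (a : ℕ → ℝ) : Tendsto (tail a) atTop (𝓝 0) := by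
  have := tendsto_sum_nat_add a
  unfold tail
  simpa only [add_comm] using this

lemma sum_Ico_eq_tail_sub (a : ℕ → ℝ) (hsum : Summable a) {p q : ℕ} (h : p ≤ q) :
    ∑ i ∈ Finset.Ico p q, a i = tail a p - tail a q := by
  induction q, h using Nat.le_induction with
  | base => simp
  | succ q hq ih =>
    rw [Finset.sum_Ico_succ_top hq, ih]
    linarith [tail_succ a hsum q]

/-- If `t` is much smaller than `s`, then `s - t` splits into `m` equal parts that are at most
`2 * t`, but not much smaller than that. -/
lemma exists_block_s10 (s t : ℝ) (ht : 0 < t) (hst : 6 * t ≤ s) :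
    ∃ (m : ℕ) (β : ℝ), 0 < m ∧ 0 < β ∧ m * β = s - t ∧ β ≤ 2 * t ∧
      ((m : ℝ) + 1) * t ≤ 3 / 4 * s := by
  have hq : 0 < (s - t) / (2 * t) := div_pos (by linarith) (by linarith)
  have hm : 0 < ⌈(s - t) / (2 * t)⌉₊ := Nat.ceil_pos.2 hq
  have hm' : (0 : ℝ) < ⌈(s - t) / (2 * t)⌉₊ := by exact_mod_cast hm
  have h1 := Nat.le_ceil ((s - t) / (2 * t))
  have h2 := Nat.ceil_lt_add_one hq.le
  have h3 : (s - t) / (2 * t) * t = (s - t) / 2 := by field_simp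
  refine ⟨_, (s - t) / ⌈(s - t) / (2 * t)⌉₊, hm, div_pos (by linarith) hm', ?_, ?_, ?_⟩
  · exact mul_div_cancel₀ _ hm'.ne'
  · rw [div_le_iff₀ hm']
    nlinarith
  · nlinarith

/-- For every achievable Cantorval D = A(a_n) there is an achievable
Cantor set C = A(b_n) such that D + C is a closed interval. -/
theorem stmt_10 (a : ℕ → ℝ) (hpos : ∀ n, 0 < a n) (hmono : Antitone a)
    (hsum : Summable a) (hD : IsCantorval (achievementSet a)) :
    ∃ b : ℕ → ℝ, (∀ n, 0 < b n) ∧ Summable b ∧ IsCantorSet (achievementSet b) ∧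
      ∃ u v : ℝ, achievementSet a + achievementSet b = Set.Icc u v := by
  classical
  have htp := tail_pos a hpos hsum
  have hstep : ∀ n, ∃ n', n < n' ∧ 6 * tail a n' ≤ tail a n := by
    intro n
    have h1 := (tendsto_tail a).eventually
      (gt_mem_nhds (show (0 : ℝ) < tail a n / 6 by linarith [htp n]))
    obtain ⟨n', h, h'⟩ := (h1.and (eventually_gt_atTop n)).exists
    exact ⟨n', h', by linarith⟩
  choose g hg1 hg2 using hstep
  let n : ℕ → ℕ := fun k => g^[k] 0
  have hns : ∀ k, n (k + 1) = g (n k) := fun k => Function.iterate_succ_apply' g k 0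
  have hn : StrictMono n := strictMono_nat_of_lt_succ fun k => by rw [hns]; exact hg1 _
  let T : ℕ → ℝ := fun k => tail a (n k)
  have hT : ∀ k, 0 < T k := fun k => htp _
  have hT6 : ∀ k, 6 * T (k + 1) ≤ T k := fun k => by
    simp only [T, hns]; exact hg2 _
  have hTlim : Tendsto T atTop (𝓝 0) := (tendsto_tail a).comp hn.tendsto_atTop
  choose m β hm0 hβ hmβ hβT hm using fun k => exists_block_s10 (T k) (T (k + 1)) (hT _) (hT6 k)
  have haT : ∀ k, ∀ i ≥ n k, a i ≤ T k := by
    intro k i hi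
    have h1 := sum_Ico_eq_tail_sub a hsum hi
    have h2 : 0 ≤ ∑ i ∈ Finset.Ico (n k) i, a i := Finset.sum_nonneg fun j _ => (hpos j).le
    have h3 := tail_succ a hsum i
    have h4 := htp (i + 1)
    simp only [T]
    linarith
  have haS : ∀ k, ∑ i ∈ Finset.Ico (n k) (n (k + 1)), a i = T k - T (k + 1) :=
    fun k => sum_Ico_eq_tail_sub a hsum (hn.monotone k.le_succ)
  have ha_sum : HasSum a (T 0) := by
    have : T 0 = ∑' i, a i := by simp [T, n, tail]
    rw [this]
    exact hsum.hasSum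
  -- Terms of `b` are indexed by pairs (block, position in the block).
  let f : (Σ k, Fin (m k)) → ℝ := fun p => β p.1
  have hfib : ∀ k, HasSum (fun i : Fin (m k) => f ⟨k, i⟩) (T k - T (k + 1)) := by
    intro k
    have := hasSum_fintype (fun i : Fin (m k) => f ⟨k, i⟩)
    simpa [f, hmβ] using this
  have htel : HasSum (fun k => T k - T (k + 1)) (T 0) := by
    rw [hasSum_iff_tendsto_nat_of_nonneg fun k => by linarith [hT6 k, hT (k + 1)]]
    simp only [Finset.sum_range_sub']
    simpa using hTlim.const_sub (T 0)
  have hf_summable : Summable f := by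
    rw [summable_sigma_of_nonneg fun p => (hβ p.1).le]
    exact ⟨fun k => (hfib k).summable, by
      rw [show (fun k => ∑' i : Fin (m k), f ⟨k, i⟩) = fun k => T k - T (k + 1) from
        funext fun k => (hfib k).tsum_eq]
      exact htel.summable⟩
  have hf_sum : HasSum f (T 0) := by
    have h := hf_summable.hasSum.sigma hfib
    rw [htel.unique h]
    exact hf_summable.hasSum
  have : Infinite (Σ k, Fin (m k)) :=
    Infinite.of_injective (fun k : ℕ => (⟨k, ⟨0, hm0 k⟩⟩ : Σ k, Fin (m k)))
      fun k l h => congrArg Sigma.fst h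
  obtain ⟨e⟩ : Nonempty (ℕ ≃ Σ k, Fin (m k)) := nonempty_equiv_of_countable
  have hb_pos : ∀ i, 0 < (f ∘ e) i := fun i => hβ _
  have hb_sum : HasSum (f ∘ e) (T 0) := e.hasSum_iff.2 hf_sum
  have hDc := isCompact_achievementSet a hpos hsum
  have hCc := isCompact_achievementSet (f ∘ e) hb_pos hb_sum.summable
  have hnull : volume (achievementSet (f ∘ e)) = 0 := by
    refine volume_digitSums β T m hβ hT hmβ hm _ fun x hx => ?_
    obtain ⟨I, hI⟩ := (mem_achievementSet_iff _ x).1 hx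
    -- The digit `j k` counts the chosen terms in the `k`-th block.
    refine ⟨fun k => (Finset.univ.filter fun i : Fin (m k) => e.symm ⟨k, i⟩ ∈ I).card,
      fun k => (Finset.card_le_univ _).trans_eq (Fintype.card_fin _), ?_⟩
    have h1 : HasSum (fun p => if e.symm p ∈ I then f p else 0) x := by
      rw [← e.hasSum_iff]
      convert hI using 1
      ext i
      simp [Set.indicator_apply]
    refine h1.sigma fun k => ?_
    have := hasSum_fintype (fun i : Fin (m k) => if e.symm ⟨k, i⟩ ∈ I then f ⟨k, i⟩ else 0)
    convert this using 1
    rw [← Finset.sum_filter]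
    simp [f]
  refine ⟨f ∘ e, hb_pos, hb_sum.summable, ⟨⟨_, finsum_mem_achievementSet _ ∅⟩, hCc,
    perfect_achievementSet _ hb_pos hb_sum.summable, Measure.interior_eq_empty_of_null hnull⟩,
    0, 2 * T 0, ?_⟩
  refine Set.Subset.antisymm ?_ ?_
  · rintro _ ⟨x, hx, y, hy, rfl⟩
    have h1 := achievementSet_subset_Icc a hpos ha_sum hx
    have h2 := achievementSet_subset_Icc _ hb_pos hb_sum hy
    exact ⟨add_nonneg h1.1 h2.1, by linarith [h1.2, h2.2]⟩
  · rintro x ⟨hx0, hx1⟩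
    rw [← (hDc.add hCc).isClosed.closure_eq, Metric.mem_closure_iff]
    intro ε hε
    obtain ⟨K, hK⟩ := (hTlim.eventually (gt_mem_nhds (half_pos hε))).exists
    obtain ⟨I, J, -, -, h0, h1⟩ := exists_approx a hpos n T β m
      (fun k => hn.monotone k.le_succ) hT hβ haT haS hmβ hβT x hx0 hx1 K
    refine ⟨_, Set.add_mem_add (finsum_mem_achievementSet a I)
      (finsum_mem_achievementSet (f ∘ e) (J.map e.symm.toEmbedding)), ?_⟩
    rw [Finset.sum_map, Real.dist_eq]
    simp only [Equiv.coe_toEmbedding, Function.comp_apply, Equiv.apply_symm_apply, f]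
    rw [abs_of_nonneg] <;> linarith
end

section
/- There exists an achievable Cantorval D such that for every k ∈ ℕ the algebraic sum of k copies of D is again a Cantorval. Such D can be obtained as the achievement set of a suitable generalized Ferens series with m_n = n+1 satisfying limsup a_n/r_n = +∞. -/
/-!
The series is built from pairs `w i + 2⁻ⁱ, w i`. Choosing exactly one element of each pair yields
`∑ w i` plus an arbitrary binary expansion, so the achievement set `A`, and likewise the
achievement set of each tail, contains an interval (`pairSeq_interior`). The numbers `w i` are
`g i / 2 ^ i`, where `g` climbs by one at each step and falls back to `2` at each perfect square.
The slow climb keeps the sequence nonincreasing, while just before the square `(s + 1)²` the term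
`w i` exceeds the whole remaining tail by a factor of order `s` (`pairSeq_gap`). Hence for each `k` the
`k`-fold sum of the achievement set of a tail has gaps arbitrarily close to `0`.

This suffices for a Cantorval (`isCantorval_of_decomp`). The `k`-fold sum `E` of `A` is, for every
`n`, a finite set plus the small `k`-fold sum of a tail, which has interior; so `E` is the closure
of its interior. If `(u, v)` is a gap of `E` with `v ∈ E`, then at a scale below `v - u` the point
`v` must lie in the finite set, so near `v`, on the right, `E` is a translate of a tail sum near
`0` and has gaps accumulating at `v`. Thus ends of gaps are trivial components (left ends by the
symmetry of `E`). Any endpoint of a nontrivial component is approached from outside by gaps, and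
therefore by trivial components.
-/

open Set MeasureTheory Pointwise

/-- The algebraic sum of k copies of D (the empty sum being {0}). -/
def sumN (D : Set ℝ) : ℕ → Set ℝ
  | 0 => {0}
  | n + 1 => sumN D n + D

/-! ### A criterion for Cantorvals -/

/-- A point of `E` that is a limit of the complement of `E` from both sides is a trivial
component. -/
lemma trivial_component {E : Set ℝ} {v : ℝ} (hv : v ∈ E)
    (hl : ∀ ε > 0, ∃ w, v - ε < w ∧ w < v ∧ w ∉ E)
    (hr : ∀ ε > 0, ∃ w, v < w ∧ w < v + ε ∧ w ∉ E) :
    connectedComponentIn E v = {v} := by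
  have hpre : (connectedComponentIn E v).OrdConnected :=
    isPreconnected_connectedComponentIn.ordConnected
  have hvm := mem_connectedComponentIn hv
  refine Subset.antisymm (fun z hz => ?_) (by simpa using hvm)
  rcases lt_trichotomy z v with h | h | h
  · obtain ⟨w, hw1, hw2, hw3⟩ := hl (v - z) (by linarith)
    exact absurd (connectedComponentIn_subset _ _
      (hpre.out hz hvm ⟨by linarith, hw2.le⟩)) hw3
  · exact h
  · obtain ⟨w, hw1, hw2, hw3⟩ := hr (z - v) (by linarith)
    exact absurd (connectedComponentIn_subset _ _
      (hpre.out hvm hz ⟨hw1.le, by linarith⟩)) hw3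

/-- If complementary intervals of `E` are never adjacent to an interval contained in `E`, then
the endpoints of nontrivial components are accumulated by trivial components: the end of a
gap close to such an endpoint is itself a trivial component. -/
lemma isCantorval_of_gaps {E : Set ℝ} (hne : E.Nonempty) (hc : IsCompact E)
    (hint : E ⊆ closure (interior E))
    (hL : ∀ u v, u < v → v ∈ E → (∀ z, u < z → z < v → z ∉ E) →
      ∀ ε > 0, ∃ w, v < w ∧ w < v + ε ∧ w ∉ E)
    (hR : ∀ u v, u < v → u ∈ E → (∀ z, u < z → z < v → z ∉ E) →
      ∀ ε > 0, ∃ w, u - ε < w ∧ w < u ∧ w ∉ E) :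
    IsCantorval E := by
  refine ⟨hne, hc, Subset.antisymm hint
    (closure_minimal interior_subset hc.isClosed), ?_⟩
  intro x hx hnt y hy ε hε
  set C := connectedComponentIn E x with hC
  have hCE : C ⊆ E := connectedComponentIn_subset _ _
  have hCp : IsPreconnected C := isPreconnected_connectedComponentIn
  have hxC : x ∈ C := mem_connectedComponentIn hx
  have hCcl : closure C ⊆ C :=
    hCp.closure.subset_connectedComponentIn (subset_closure hxC)
      (closure_minimal hCE hc.isClosed)
  have hbb : BddBelow C := hc.bddBelow.mono hCE
  have hba : BddAbove C := hc.bddAbove.mono hCE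
  have hlow : sInf C ∈ C := hCcl (csInf_mem_closure ⟨x, hxC⟩ hbb)
  have hup : sSup C ∈ C := hCcl (csSup_mem_closure ⟨x, hxC⟩ hba)
  have hlt : sInf C < sSup C := by
    obtain ⟨p, hp, q, hq, hpq⟩ := hnt
    rcases lt_or_gt_of_ne hpq with h | h
    · exact (csInf_le hbb hp).trans_lt (h.trans_le (le_csSup hba hq))
    · exact (csInf_le hbb hq).trans_lt (h.trans_le (le_csSup hba hp))
  have hord : Icc (sInf C) (sSup C) ⊆ E := (hCp.ordConnected.out hlow hup).trans hCE
  have hsub : ∀ p q y', y' ∈ C → y' ∈ Icc p q → Icc p q ⊆ E → Icc p q ⊆ C := by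
    intro p q y' hy' hyI hsE
    have h1 := isPreconnected_Icc.subset_connectedComponentIn hyI hsE
    rwa [← connectedComponentIn_eq hy'] at h1
  rcases hy with rfl | hy
  · set y := sInf C
    obtain ⟨p, hp1, hp2, hp3⟩ : ∃ p, y - ε < p ∧ p < y ∧ p ∉ E := by
      by_contra! hcon
      have : Icc (y - ε / 2) y ⊆ C := by
        refine hsub _ _ y hlow ⟨by linarith, le_rfl⟩ ?_
        intro z hz
        rcases eq_or_lt_of_le hz.2 with h | h
        · rw [h]; exact hCE hlow
        · exact hcon z (by linarith [hz.1]) h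
      have := csInf_le hbb (this ⟨le_rfl, by linarith⟩)
      change y ≤ _ at this
      linarith
    -- the right end of the gap containing `p`
    have hK : IsCompact (E ∩ Ici p) := hc.inter_right isClosed_Ici
    have hyK : y ∈ E ∩ Ici p := ⟨hCE hlow, hp2.le⟩
    have hvm := hK.sInf_mem ⟨y, hyK⟩
    have hvy := csInf_le hK.bddBelow hyK
    have hvlow : ∀ z, p < z → z < sInf (E ∩ Ici p) → z ∉ E := fun z h1 h2 hz =>
      absurd (csInf_le hK.bddBelow (show z ∈ E ∩ Ici p from ⟨hz, h1.le⟩)) (not_le.2 h2)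
    set v := sInf (E ∩ Ici p)
    have hpv : p < v := lt_of_le_of_ne hvm.2 (fun h => hp3 (h ▸ hvm.1))
    have hr := hL p v hpv hvm.1 hvlow
    have hvne : v ≠ y := by
      intro h
      obtain ⟨w, h1, h2, h3⟩ := hr (sSup C - y) (by linarith)
      exact h3 (hord ⟨by linarith, by linarith⟩)
    refine ⟨v, hvm.1, hvne, ?_, trivial_component hvm.1 (fun δ hδ => ?_) hr⟩
    · rw [abs_sub_lt_iff]; constructor <;> linarith
    · obtain ⟨w, hw1, hw2⟩ := exists_between (max_lt hpv (by linarith : v - δ < v))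
      exact ⟨w, (le_max_right _ _).trans_lt hw1, hw2,
        hvlow w ((le_max_left _ _).trans_lt hw1) hw2⟩
  · have hy : y = sSup C := hy
    subst hy
    set y := sSup C
    obtain ⟨p, hp1, hp2, hp3⟩ : ∃ p, y < p ∧ p < y + ε ∧ p ∉ E := by
      by_contra! hcon
      have : Icc y (y + ε / 2) ⊆ C := by
        refine hsub _ _ y hup ⟨le_rfl, by linarith⟩ ?_
        intro z hz
        rcases eq_or_lt_of_le hz.1 with h | h
        · rw [← h]; exact hCE hup
        · exact hcon z h (by linarith [hz.2])
      have := le_csSup hba (this ⟨by linarith, le_rfl⟩)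
      change _ ≤ y at this
      linarith
    have hK : IsCompact (E ∩ Iic p) := hc.inter_right isClosed_Iic
    have hyK : y ∈ E ∩ Iic p := ⟨hCE hup, hp1.le⟩
    have hvm := hK.sSup_mem ⟨y, hyK⟩
    have hvy := le_csSup hK.bddAbove hyK
    have hvup : ∀ z, sSup (E ∩ Iic p) < z → z < p → z ∉ E := fun z h1 h2 hz =>
      absurd (le_csSup hK.bddAbove (show z ∈ E ∩ Iic p from ⟨hz, h2.le⟩)) (not_le.2 h1)
    set v := sSup (E ∩ Iic p)
    have hpv : v < p := lt_of_le_of_ne hvm.2 (fun h => hp3 (h ▸ hvm.1))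
    have hl := hR v p hpv hvm.1 hvup
    have hvne : v ≠ y := by
      intro h
      obtain ⟨w, h1, h2, h3⟩ := hl (y - sInf C) (by linarith)
      exact h3 (hord ⟨by linarith, by linarith⟩)
    refine ⟨v, hvm.1, hvne, ?_, trivial_component hvm.1 hl (fun δ hδ => ?_)⟩
    · rw [abs_sub_lt_iff]; constructor <;> linarith
    · obtain ⟨w, hw1, hw2⟩ := exists_between (lt_min hpv (by linarith : v < v + δ))
      exact ⟨w, hw1, hw2.trans_le (min_le_right _ _),
        hvup w hw1 (hw2.trans_le (min_le_left _ _))⟩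

/-- A compact symmetric set `E` that decomposes, at arbitrarily small scales `d N`, as a finite
set plus a set `T N ⊆ [0, d N]` with nonempty interior, and such that `0` is a limit of the
complement of `T N` from the right, is a Cantorval. -/
lemma isCantorval_of_decomp {E : Set ℝ} {F T : ℕ → Set ℝ} {d : ℕ → ℝ} {s : ℝ}
    (hc : IsCompact E) (hsym : ∀ x ∈ E, s - x ∈ E)
    (hdec : ∀ N, E = F N + T N) (hfin : ∀ N, (F N).Finite)
    (h0F : ∀ N, 0 ∈ F N) (h0T : ∀ N, 0 ∈ T N) (hT : ∀ N, T N ⊆ Icc 0 (d N))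
    (hd : ∀ ε > 0, ∃ N, d N < ε) (hint : ∀ N, (interior (T N)).Nonempty)
    (hgap : ∀ N, ∀ ε > 0, ∃ t, 0 < t ∧ t < ε ∧ t ∉ T N) :
    IsCantorval E := by
  have hFE : ∀ N, F N ⊆ E := fun N f hf => by
    rw [hdec N]; exact ⟨f, hf, 0, h0T N, by simp⟩
  have hL : ∀ u v, u < v → v ∈ E → (∀ z, u < z → z < v → z ∉ E) →
      ∀ ε > 0, ∃ w, v < w ∧ w < v + ε ∧ w ∉ E := by
    intro u v huv hv hg ε hε
    obtain ⟨N, hN⟩ := hd (v - u) (by linarith)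
    -- elements of `F N` to the right of `v` stay at a positive distance from `v`
    obtain ⟨δ, hδ, hδF⟩ : ∃ δ > 0, ∀ f ∈ F N, v < f → v + δ ≤ f := by
      have hfin' : (F N ∩ Ioi v).Finite := (hfin N).subset inter_subset_left
      rcases (F N ∩ Ioi v).eq_empty_or_nonempty with h | h
      · exact ⟨1, one_pos, fun f hf hvf => by
          have : f ∈ F N ∩ Ioi v := ⟨hf, hvf⟩
          rw [h] at this; exact this.elim⟩
      · obtain ⟨m, hm, hmin⟩ := hfin'.exists_minimal h
        refine ⟨m - v, sub_pos.2 hm.2, fun f hf hvf => ?_⟩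
        rcases le_total m f with h' | h'
        · linarith
        · linarith [hmin (show f ∈ F N ∩ Ioi v from ⟨hf, hvf⟩) h']
    have hleft : ∀ f ∈ F N, ∀ e ∈ T N, v ≤ f + e → v ≤ f := by
      intro f hf e he hfe
      by_contra! hlt
      have := (hT N he).2
      exact hg f (by linarith) hlt (hFE N hf)
    obtain ⟨t, ht0, ht1, ht2⟩ := hgap N (min ε δ) (lt_min hε hδ)
    refine ⟨v + t, by linarith, by linarith [min_le_left ε δ], ?_⟩
    intro hmem
    rw [hdec N] at hmem
    obtain ⟨f, hf, e, he, hfe⟩ := hmem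
    simp only at hfe
    have h1 := hleft f hf e he (by linarith)
    rcases eq_or_lt_of_le h1 with h | h
    · subst h
      have : e = t := by linarith
      exact ht2 (this ▸ he)
    · linarith [hδF f hf h, (hT N he).1, min_le_right ε δ]
  refine isCantorval_of_gaps ⟨0, hFE 0 (h0F 0)⟩ hc ?_ hL ?_
  · intro x hx
    rw [Metric.mem_closure_iff]
    intro ε hε
    obtain ⟨N, hN⟩ := hd ε hε
    have hx' := hx
    rw [hdec N] at hx'
    obtain ⟨f, hf, e, he, rfl⟩ := hx'
    obtain ⟨c, hcI⟩ := hint N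
    refine ⟨f + c, ?_, ?_⟩
    · have hop : IsOpen ((fun z => f + z) '' interior (T N)) :=
        (Homeomorph.addLeft f).isOpenMap _ isOpen_interior
      refine interior_maximal ?_ hop ⟨c, hcI, rfl⟩
      rintro _ ⟨z, hz, rfl⟩
      rw [hdec N]
      exact ⟨f, hf, z, interior_subset hz, rfl⟩
    · have h1 := hT N he
      have h2 := hT N (interior_subset hcI)
      simp only [Real.dist_eq]
      rw [abs_sub_lt_iff]
      constructor <;> linarith [h1.1, h1.2, h2.1, h2.2]
  · intro u v huv hu hg ε hε
    obtain ⟨w, h1, h2, h3⟩ := hL (s - v) (s - u) (by linarith) (hsym u hu)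
      (fun z hz1 hz2 hz => hg (s - z) (by linarith) (by linarith) (hsym z hz)) ε hε
    refine ⟨s - w, by linarith, by linarith, fun hw => h3 ?_⟩
    have := hsym _ hw
    rwa [sub_sub_cancel] at this

/-! ### Iterated sumsets -/

lemma sumN_add (X Y : Set ℝ) (k : ℕ) : sumN (X + Y) k = sumN X k + sumN Y k := by
  induction k with
  | zero => simp [sumN]
  | succ n ih => simp only [sumN, ih]; exact add_add_add_comm _ _ _ _

lemma sumN_finite {X : Set ℝ} (h : X.Finite) (k : ℕ) : (sumN X k).Finite := by
  induction k with
  | zero => exact finite_singleton 0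
  | succ n ih => exact ih.add h

lemma sumN_compact {X : Set ℝ} (h : IsCompact X) (k : ℕ) : IsCompact (sumN X k) := by
  induction k with
  | zero => exact isCompact_singleton
  | succ n ih => exact ih.add h

lemma sumN_zero_mem {X : Set ℝ} (h : (0 : ℝ) ∈ X) (k : ℕ) : (0 : ℝ) ∈ sumN X k := by
  induction k with
  | zero => rfl
  | succ n ih => exact ⟨0, ih, 0, h, by simp⟩

lemma sumN_symm {X : Set ℝ} {s : ℝ} (h : ∀ x ∈ X, s - x ∈ X) (k : ℕ) :
    ∀ x ∈ sumN X k, k * s - x ∈ sumN X k := by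
  induction k with
  | zero => rintro x rfl; simp [sumN]
  | succ n ih =>
    rintro _ ⟨x, hx, y, hy, rfl⟩
    exact ⟨_, ih x hx, _, h y hy, by push_cast; ring⟩

lemma sumN_subset_Icc {X : Set ℝ} {d : ℝ} (h : X ⊆ Icc 0 d) (k : ℕ) :
    sumN X k ⊆ Icc 0 (k * d) := by
  induction k with
  | zero => rintro x rfl; simp
  | succ n ih =>
    rintro _ ⟨x, hx, y, hy, rfl⟩
    have h1 := ih hx
    have h2 := h hy
    push_cast
    exact ⟨add_nonneg h1.1 h2.1, by linarith [h1.2, h2.2]⟩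

lemma sumN_mono_interior {X : Set ℝ} (h0 : (0 : ℝ) ∈ X) (h : (interior X).Nonempty) {k : ℕ}
    (hk : 1 ≤ k) : (interior (sumN X k)).Nonempty := by
  obtain ⟨n, rfl⟩ := Nat.exists_eq_add_of_le' hk
  refine h.mono (interior_mono fun x hx => ?_)
  exact ⟨0, sumN_zero_mem h0 n, x, hx, by simp⟩

/-- A jump of `X` from at most `r` to at least `b` produces a jump of the `k`-fold sum from at
most `k * r` to at least `b`. -/
lemma sumN_dichotomy {X : Set ℝ} {b r : ℝ} (hpos : ∀ x ∈ X, 0 ≤ x)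
    (h : ∀ x ∈ X, b ≤ x ∨ x ≤ r) (k : ℕ) :
    ∀ x ∈ sumN X k, 0 ≤ x ∧ (b ≤ x ∨ x ≤ k * r) := by
  induction k with
  | zero => rintro x rfl; simp
  | succ n ih =>
    rintro _ ⟨x, hx, y, hy, rfl⟩
    obtain ⟨h1, h2⟩ := ih x hx
    have h3 := hpos y hy
    refine ⟨add_nonneg h1 h3, ?_⟩
    push_cast
    rcases h2 with h2 | h2
    · left; linarith
    rcases h y hy with h4 | h4
    · left; linarith
    · right; linarith

/-! ### Achievement sets -/

lemma mem_achievementSet {a : ℕ → ℝ} {x : ℝ} :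
    x ∈ achievementSet a ↔ ∃ I : Set ℕ, HasSum (I.indicator a) x :=
  exists_congr fun _ => hasSum_subtype_iff_indicator

lemma achievementSet_zero_mem (a : ℕ → ℝ) : (0 : ℝ) ∈ achievementSet a :=
  mem_achievementSet.2 ⟨∅, by simp⟩

lemma achievementSet_subset_Icc_s13 {a : ℕ → ℝ} (hpos : ∀ n, 0 < a n) (hs : Summable a) :
    achievementSet a ⊆ Icc 0 (∑' i, a i) := by
  intro x hx
  obtain ⟨I, hI⟩ := mem_achievementSet.1 hx
  exact ⟨hI.nonneg fun i => indicator_nonneg (fun i _ => (hpos i).le) i,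
    hasSum_le (fun i => indicator_le_self' (fun i _ => (hpos i).le) i) hI hs.hasSum⟩

lemma achievementSet_symm {a : ℕ → ℝ} (hs : Summable a) :
    ∀ x ∈ achievementSet a, (∑' i, a i) - x ∈ achievementSet a := by
  intro x hx
  obtain ⟨I, hI⟩ := mem_achievementSet.1 hx
  refine mem_achievementSet.2 ⟨Iᶜ, ?_⟩
  rw [indicator_compl]
  exact hs.hasSum.sub hI

/-- The achievement set is a continuous image of the Cantor space. -/
lemma achievementSet_compact {a : ℕ → ℝ} (hpos : ∀ n, 0 < a n) (hs : Summable a) :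
    IsCompact (achievementSet a) := by
  have hcont : Continuous (fun s : ℕ → Bool => ∑' i, if s i = true then a i else 0) := by
    refine continuous_tsum (u := a) (fun i => ?_) hs (fun i s => ?_)
    · exact (continuous_of_discreteTopology (f := fun b : Bool => if b = true then a i else 0)).comp
        (continuous_apply i)
    · split_ifs
      · rw [Real.norm_of_nonneg (hpos i).le]
      · simpa using (hpos i).le
  convert! isCompact_range hcont using 1
  ext x
  rw [mem_achievementSet]
  constructor
  · rintro ⟨I, hI⟩
    classical
    refine ⟨fun i => decide (i ∈ I), ?_⟩
    rw [← hI.tsum_eq]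
    exact tsum_congr fun i => by simp [indicator]
  · rintro ⟨s, rfl⟩
    refine ⟨{i | s i = true}, ?_⟩
    have := (hs.indicator {i | s i = true}).hasSum
    convert! this using 1
    exact tsum_congr fun i => by simp [indicator]

lemma Fset_finite (a : ℕ → ℝ) (N : ℕ) : (Fset a N).Finite := by
  refine ((Finset.range N).powerset.finite_toSet.image fun I => ∑ i ∈ I, a i).subset ?_
  rintro x ⟨I, hI, rfl⟩
  exact ⟨I, by rwa [Finset.mem_coe, Finset.mem_powerset], rfl⟩

lemma Fset_zero_mem (a : ℕ → ℝ) (N : ℕ) : (0 : ℝ) ∈ Fset a N :=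
  ⟨∅, by simp, by simp⟩

lemma achievementSet_decomp (a : ℕ → ℝ) (N : ℕ) :
    achievementSet a = Fset a N + achievementSet (fun i => a (i + N)) := by
  classical
  ext x
  constructor
  · intro hx
    obtain ⟨I, hI⟩ := mem_achievementSet.1 hx
    refine ⟨∑ i ∈ Finset.range N, I.indicator a i, ⟨(Finset.range N).filter (· ∈ I),
      Finset.filter_subset _ _, ?_⟩, x - ∑ i ∈ Finset.range N, I.indicator a i,
      mem_achievementSet.2 ⟨{i | i + N ∈ I}, ?_⟩, by simp⟩
    · rw [Finset.sum_filter]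
      exact Finset.sum_congr rfl fun i _ => by simp [indicator]
    · have := (hasSum_nat_add_iff' N).2 hI
      convert! this using 1
  · rintro ⟨_, ⟨J, hJ, rfl⟩, y, hy, rfl⟩
    obtain ⟨I, hI⟩ := mem_achievementSet.1 hy
    refine mem_achievementSet.2 ⟨{i | if i < N then i ∈ J else i - N ∈ I}, ?_⟩
    rw [← hasSum_nat_add_iff' N]
    convert! hI using 1
    · funext i
      simp [indicator]
    · have : ∑ i ∈ Finset.range N, indicator {i | if i < N then i ∈ J else i - N ∈ I} a i
          = ∑ i ∈ J, a i := by
        rw [← Finset.inter_eq_right.2 hJ, ← Finset.sum_ite_mem, Finset.inter_eq_right.2 hJ]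
        exact Finset.sum_congr rfl fun i hi => by
          simp [indicator, Finset.mem_range.1 hi]
      rw [this]
      ring

/-- A subsum of the terms of index at least `M` either uses a term of index at most `N`, or is
bounded by the sum of the terms of index greater than `N`. -/
lemma tail_dichotomy {a : ℕ → ℝ} (hpos : ∀ n, 0 < a n) (hanti : Antitone a) (hs : Summable a)
    {M N : ℕ} (hMN : M ≤ N) :
    ∀ x ∈ achievementSet (fun i => a (i + M)), a N ≤ x ∨ x ≤ ∑' i, a (i + (N + 1)) := by
  intro x hx
  obtain ⟨I, hI⟩ := mem_achievementSet.1 hx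
  by_cases h : ∃ i ∈ I, i + M ≤ N
  · left
    obtain ⟨i, hi, hiN⟩ := h
    have := le_hasSum hI i fun j _ => indicator_nonneg (fun i _ => (hpos _).le) j
    rw [indicator_of_mem hi] at this
    exact (hanti hiN).trans this
  · right
    push Not at h
    have h1 := (hasSum_nat_add_iff' (N + 1 - M)).2 hI
    rw [Finset.sum_eq_zero, sub_zero] at h1
    · refine hasSum_le (fun i => ?_) h1 ((summable_nat_add_iff (N + 1)).2 hs).hasSum
      refine (indicator_le_self' (fun i _ => (hpos _).le) _).trans_eq ?_
      change a _ = a _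
      congr 1
      omega
    · intro i hi
      refine indicator_of_notMem (fun hiI => ?_) _
      have := h i hiI
      have := Finset.mem_range.1 hi
      omega

/-- The general principle: fat tails together with gaps much longer than the following tail
make every `k`-fold sum of the achievement set a Cantorval. -/
lemma isCantorval_sumN {a : ℕ → ℝ} (hpos : ∀ n, 0 < a n) (hanti : Antitone a) (hs : Summable a)
    (hint : ∀ n, (interior (achievementSet fun i => a (i + 2 * n))).Nonempty)
    (hgap : ∀ k M : ℕ, ∃ N, M ≤ N ∧ k * ∑' i, a (i + (N + 1)) < a N) {k : ℕ} (hk : 1 ≤ k) :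
    IsCantorval (sumN (achievementSet a) k) := by
  have hs' : ∀ N, Summable fun i => a (i + N) := fun N => (summable_nat_add_iff N).2 hs
  refine isCantorval_of_decomp (s := k * ∑' i, a i) (F := fun n => sumN (Fset a (2 * n)) k)
    (T := fun n => sumN (achievementSet fun i => a (i + 2 * n)) k)
    (d := fun n => k * ∑' i, a (i + 2 * n))
    (sumN_compact (achievementSet_compact hpos hs) k) (sumN_symm (achievementSet_symm hs) k)
    (fun n => by rw [← sumN_add, ← achievementSet_decomp])
    (fun n => sumN_finite (Fset_finite a _) k) (fun n => sumN_zero_mem (Fset_zero_mem a _) k)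
    (fun n => sumN_zero_mem (achievementSet_zero_mem _) k)
    (fun n => sumN_subset_Icc (achievementSet_subset_Icc_s13 (fun _ => hpos _) (hs' _)) k) ?_
    (fun n => sumN_mono_interior (achievementSet_zero_mem _) (hint n) hk) ?_
  · intro ε hε
    have h1 : Filter.Tendsto (fun n => (k : ℝ) * ∑' i, a (i + 2 * n)) Filter.atTop (nhds 0) := by
      have h2 := (tendsto_sum_nat_add a).comp
        (Filter.tendsto_id.const_mul_atTop' (by norm_num : 0 < 2))
      simpa using h2.const_mul (k : ℝ)
    exact (h1.eventually_lt_const hε).exists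
  · intro n ε hε
    obtain ⟨M, hM⟩ := (hs.tendsto_atTop_zero.eventually_lt_const hε).exists
    obtain ⟨N, hN, hNgap⟩ := hgap k (max M (2 * n))
    have h0 : (0 : ℝ) ≤ k * ∑' i, a (i + (N + 1)) :=
      mul_nonneg k.cast_nonneg (tsum_nonneg fun i => (hpos _).le)
    obtain ⟨t, ht1, ht2⟩ := exists_between hNgap
    refine ⟨t, h0.trans_lt ht1, ?_, fun ht => ?_⟩
    · exact ht2.trans ((hanti ((le_max_left _ _).trans hN)).trans_lt hM)
    · rcases (sumN_dichotomy (fun x hx => (achievementSet_subset_Icc_s13 (fun _ => hpos _)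
        (hs' _) hx).1) (tail_dichotomy hpos hanti hs ((le_max_right _ _).trans hN)) k t ht).2
        with h | h <;> linarith

/-! ### The sequence -/

/-- The numerators `g i = 2 + (i - ⌊√i⌋²)`: they start at `2`, increase by one at each step,
and are reset to `2` at each perfect square. -/
def g (i : ℕ) : ℕ := 2 + (i - Nat.sqrt i ^ 2)

/-- The numbers `w i = g i / 2 ^ i`. -/
noncomputable def w (i : ℕ) : ℝ := g i * (1 / 2) ^ i

/-- The series: the pairs `w i + 2⁻ⁱ, w i` listed consecutively. -/
noncomputable def pairSeq (n : ℕ) : ℝ := w (n / 2) + if n % 2 = 0 then (1 / 2) ^ (n / 2) else 0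

lemma pairSeq_even (i : ℕ) : pairSeq (2 * i) = w i + (1 / 2) ^ i := by simp [pairSeq]

lemma pairSeq_odd (i : ℕ) : pairSeq (2 * i + 1) = w i := by
  have h1 : (2 * i + 1) / 2 = i := by omega
  have h2 : (2 * i + 1) % 2 = 1 := by omega
  simp [pairSeq, h1, h2]

lemma g_two_le (i : ℕ) : 2 ≤ g i := Nat.le_add_right _ _

lemma g_succ (i : ℕ) : g (i + 1) ≤ g i + 1 := by
  have : Nat.sqrt i ^ 2 ≤ Nat.sqrt (i + 1) ^ 2 :=
    Nat.pow_le_pow_left (Nat.sqrt_le_sqrt (Nat.le_succ i)) 2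
  unfold g
  omega

lemma g_sq_add (s i : ℕ) : g (i + s ^ 2) ≤ i + 2 := by
  have : s ^ 2 ≤ Nat.sqrt (i + s ^ 2) ^ 2 :=
    Nat.pow_le_pow_left (Nat.le_sqrt'.2 (Nat.le_add_left _ _)) 2
  unfold g
  omega

/-- Just before the square `(s + 1)²` the numerator is large. -/
lemma g_before (s : ℕ) : g (s ^ 2 + 2 * s) = 2 * s + 2 := by
  have : Nat.sqrt (s ^ 2 + 2 * s) = s :=
    Nat.sqrt_add_eq' s (by omega)
  unfold g
  rw [this]
  omega

lemma w_pos (i : ℕ) : 0 < w i := by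
  have := g_two_le i
  unfold w
  have : (0 : ℝ) < g i := by exact_mod_cast (by omega : 0 < g i)
  positivity

lemma pairSeq_pos (n : ℕ) : 0 < pairSeq n := by
  have := w_pos (n / 2)
  unfold pairSeq
  split_ifs <;> positivity

lemma pairSeq_antitone : Antitone pairSeq := by
  refine antitone_nat_of_succ_le fun n => ?_
  obtain ⟨i, rfl | rfl⟩ := Nat.even_or_odd' n
  · rw [pairSeq_odd, pairSeq_even]
    have : (0 : ℝ) < (1 / 2) ^ i := by positivity
    linarith
  · rw [show 2 * i + 1 + 1 = 2 * (i + 1) by ring, pairSeq_odd, pairSeq_even]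
    unfold w
    have h1 : (g (i + 1) : ℝ) + 1 ≤ 2 * g i := by
      have := g_succ i
      have := g_two_le i
      exact_mod_cast (by omega : g (i + 1) + 1 ≤ 2 * g i)
    have h2 : (0 : ℝ) < (1 / 2) ^ i := by positivity
    rw [pow_succ]
    nlinarith

lemma hasSum_majorant (c : ℝ) :
    HasSum (fun i : ℕ => c * (((i : ℝ) + 2) * (1 / 2) ^ i)) (c * 6) := by
  have h1 := hasSum_coe_mul_geometric_of_norm_lt_one
    (r := (1 / 2 : ℝ)) (by rw [Real.norm_of_nonneg] <;> norm_num)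
  have h2 := (hasSum_geometric_two).mul_left (2 : ℝ)
  have h3 := (h1.add h2).mul_left c
  convert! h3 using 1
  · funext i; ring
  · norm_num

lemma w_sq_add_le (s i : ℕ) :
    w (i + s ^ 2) ≤ (1 / 2) ^ (s ^ 2) * (((i : ℝ) + 2) * (1 / 2) ^ i) := by
  have : (g (i + s ^ 2) : ℝ) ≤ i + 2 := by exact_mod_cast g_sq_add s i
  unfold w
  rw [pow_add]
  have h2 : (0 : ℝ) < (1 / 2) ^ i * (1 / 2) ^ (s ^ 2) := by positivity
  nlinarith

lemma summable_w : Summable w := by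
  refine (hasSum_majorant 1).summable.of_nonneg_of_le (fun i => (w_pos i).le) fun i => ?_
  simpa using w_sq_add_le 0 i

lemma hasSum_tail (m : ℕ) :
    HasSum (fun i => pairSeq (i + 2 * m))
      (2 * ∑' i, w (i + m) + 2 * (1 / 2) ^ m) := by
  have h1 := ((summable_nat_add_iff m).2 summable_w).hasSum
  have h2 : HasSum (fun i : ℕ => (1 / 2 : ℝ) ^ (i + m)) (2 * (1 / 2) ^ m) := by
    simpa only [pow_add] using hasSum_geometric_two.mul_right ((1 / 2 : ℝ) ^ m)
  have h3 := HasSum.even_add_odd (f := fun i => pairSeq (i + 2 * m))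
    (m := ∑' i, w (i + m) + 2 * (1 / 2) ^ m) (m' := ∑' i, w (i + m))
    (by
      convert! h1.add h2 using 1
      funext i
      rw [← pairSeq_even, ← mul_add])
    (by
      convert! h1 using 1
      funext i
      rw [← pairSeq_odd]
      congr 1
      ring)
  convert! h3 using 1
  ring

lemma pairSeq_summable : Summable pairSeq := by
  simpa using (hasSum_tail 0).summable

lemma pairSeq_gap (k M : ℕ) : ∃ N, M ≤ N ∧ k * ∑' i, pairSeq (i + (N + 1)) < pairSeq N := by
  set s := 4 * k + M with hs
  refine ⟨2 * (s ^ 2 + 2 * s) + 1, by nlinarith, ?_⟩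
  have hN : 2 * (s ^ 2 + 2 * s) + 1 + 1 = 2 * (s + 1) ^ 2 := by ring
  rw [hN, (hasSum_tail _).tsum_eq, pairSeq_odd]
  have h1 : ∑' i, w (i + (s + 1) ^ 2) ≤ (1 / 2) ^ ((s + 1) ^ 2) * 6 :=
    hasSum_le (w_sq_add_le (s + 1)) ((summable_nat_add_iff _).2 summable_w).hasSum
      (hasSum_majorant _)
  have h2 : w (s ^ 2 + 2 * s) = (4 * s + 4) * (1 / 2) ^ ((s + 1) ^ 2) := by
    rw [w, g_before, show (s + 1) ^ 2 = s ^ 2 + 2 * s + 1 by ring, pow_succ _ (s ^ 2 + 2 * s)]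
    push_cast
    ring
  rw [h2]
  have h3 : (0 : ℝ) < (1 / 2) ^ ((s + 1) ^ 2) := by positivity
  set q : ℝ := (1 / 2) ^ ((s + 1) ^ 2)
  have hk : (0 : ℝ) ≤ k := k.cast_nonneg
  have hks : (4 * k : ℝ) ≤ s := by exact_mod_cast (by omega : 4 * k ≤ s)
  calc (k : ℝ) * (2 * ∑' i, w (i + (s + 1) ^ 2) + 2 * q)
      ≤ k * (14 * q) := mul_le_mul_of_nonneg_left (by linarith) hk
    _ = (14 * k) * q := by ring
    _ < (4 * s + 4) * q := mul_lt_mul_of_pos_right (by linarith) h3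

/-- Choosing one element of each pair `w i + 2⁻ⁱ, w i` realizes `∑ w i` plus an arbitrary
binary expansion, so the achievement set of every tail contains an interval. -/
lemma pairSeq_interior (n : ℕ) :
    (interior (achievementSet fun i => pairSeq (i + 2 * n))).Nonempty := by
  have hW := ((summable_nat_add_iff n).2 summable_w).hasSum
  set W := ∑' i, w (i + n)
  have hq : (0 : ℝ) < 2 * (1 / 2) ^ n := by positivity
  have key : Ioo W (W + 2 * (1 / 2) ^ n) ⊆ achievementSet fun i => pairSeq (i + 2 * n) := by
    intro x hx
    obtain ⟨z, hz⟩ : ∃ z, z = (x - W) / (2 * (1 / 2) ^ n) := ⟨_, rfl⟩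
    have hz01 : z ∈ Ico (0 : ℝ) 1 := by
      rw [hz]
      exact ⟨div_nonneg (by linarith [hx.1]) hq.le, by rw [div_lt_one hq]; linarith [hx.2]⟩
    obtain ⟨D, hD⟩ : ∃ D : ℕ → Fin 2, HasSum (Real.ofDigitsTerm D) z :=
      ⟨_, Real.hasSum_ofDigitsTerm_digits z (b := 2) (by norm_num) hz01⟩
    -- the digit `1` selects the larger element of the pair
    obtain ⟨f, hf⟩ : ∃ f : ℕ → ℕ, f = fun i => 2 * i + (1 - (D i : ℕ)) := ⟨_, rfl⟩
    have hDlt : ∀ i, (D i : ℕ) < 2 := fun i => (D i).2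
    have hinj : Function.Injective f := by
      intro i j hij
      have := hDlt i
      have := hDlt j
      simp only [hf] at hij
      omega
    refine ⟨range f, ?_⟩
    have h1 : HasSum ((fun i => pairSeq (i + 2 * n)) ∘ f) x := by
      have h2 := hW.add (hD.mul_left (2 * (1 / 2) ^ n))
      have hx' : W + 2 * (1 / 2) ^ n * z = x := by rw [hz]; field_simp; ring
      rw [hx'] at h2
      convert! h2 using 1
      funext i
      have hDi : (D i : ℕ) = 0 ∨ (D i : ℕ) = 1 := by have := hDlt i; omega
      rcases hDi with h | h
      · simp only [Function.comp, hf, Real.ofDigitsTerm, h]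
        rw [show 2 * i + (1 - 0) + 2 * n = 2 * (i + n) + 1 by ring, pairSeq_odd]
        simp
      · simp only [Function.comp, hf, Real.ofDigitsTerm, h]
        rw [show 2 * i + (1 - 1) + 2 * n = 2 * (i + n) by ring, pairSeq_even]
        rw [pow_add, pow_succ]
        simp
        ring
    exact (Function.Injective.hasSum_range_iff (f := fun i => pairSeq (i + 2 * n)) hinj).2 h1
  refine ⟨W + (1 / 2) ^ n, interior_maximal key isOpen_Ioo ⟨?_, ?_⟩⟩ <;> linarith

/-- There exists an achievable Cantorval D such that the algebraic sum
of any finite number of copies of D is again a Cantorval. -/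
theorem stmt_13 :
    ∃ a : ℕ → ℝ, (∀ n, 0 < a n) ∧ Antitone a ∧ Summable a ∧
      IsCantorval (achievementSet a) ∧
      ∀ k : ℕ, 1 ≤ k → IsCantorval (sumN (achievementSet a) k) := by
  have h : ∀ k : ℕ, 1 ≤ k → IsCantorval (sumN (achievementSet pairSeq) k) := fun k hk =>
    isCantorval_sumN pairSeq_pos pairSeq_antitone pairSeq_summable pairSeq_interior pairSeq_gap hk
  refine ⟨pairSeq, pairSeq_pos, pairSeq_antitone, pairSeq_summable, ?_, h⟩
  have h1 := h 1 le_rfl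
  simpa [sumN] using h1
end
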